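/- arXiv:2105.08608 — 4 statements merged into one kernel-verified Lean document; each statement's English description precedes it below -/
import Mathlib

section
/- Let k ≥ 2 be an integer, let 0 < α < (10^k · k^k · (k+1)!)^{-1}, and let n be an integer with n ≡ 0 (mod k) and n sufficiently large in terms of α (1/n ≪ α). Let 𝓗_k(n,n/k) be the balanced (1,k)-partite (k+1)-graph with partition classes X (|X| = n/k) and [n], whose edges are the sets e ∪ {x} with x ∈ X and e ∈ H_k(n,n/k) = { e ∈ binom([n],k) : e ∩ [n/k] ≠ ∅ and e ∩ ([n]\[n/k]) ≠ ∅ }. If H is a balanced (1,k)-partite (k+1)-graph on the same vertex set (with the same partition classes X, [n]) such that every vertex of H is α-good with respect to 𝓗_k(n,n/k), then H has a perfect matching. -/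
/-- The balanced `(1,k)`-partite `(k+1)`-graph `𝓗_k(n, n/k)` on `X ⊕ [n]`
(`X = Fin (n/k)`): edges are `{x} ∪ e` where `x ∈ X` and `e` is a `k`-subset of
`[n]` meeting both `[n/k]` (the first `n/k` elements) and its complement. -/
def calHk (n k : ℕ) : Finset (Finset (Fin (n / k) ⊕ Fin n)) :=
  Finset.univ.biUnion (fun x : Fin (n / k) =>
    ((Finset.powersetCard k (Finset.univ : Finset (Fin n))).filter
      (fun s => (∃ v : Fin n, v ∈ s ∧ (v : ℕ) < n / k) ∧ (∃ v : Fin n, v ∈ s ∧ n / k ≤ (v : ℕ)))).image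
      (fun s => insert (Sum.inl x) (s.image Sum.inr)))

/-- The link `N_H(v)` of a vertex `v`: the `k`-sets `e \ {v}` over edges `e ∋ v`. -/
def linkOf {V : Type*} [DecidableEq V] (H : Finset (Finset V)) (v : V) :
    Finset (Finset V) :=
  (H.filter (fun e => v ∈ e)).image (fun e => e.erase v)

/-!
Cut `[n]` into `k` intervals of length `m = n / k`, the first one being `[n/k]`. Since `k ≥ 2`,
every transversal of the `k + 1` parts given by `X` and these intervals is an edge of
`𝓗_k(n, n/k)`, so each vertex lies in at most `α ((k + 1) m) ^ k` transversals outside `H`.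

Choose a partition of the vertices into `m` transversals with as many edges of `H` as possible. If
the transversal `t₀` is not an edge, consider the tuples `(t₀, …, t_k)` of distinct transversals of
the partition. Rotating part `j` by `j` steps along the tuple replaces its members by `k + 1` new
transversals, each containing a vertex of `t₀`. Hence at most `(k + 1) α ((k + 1) m) ^ k` tuples
produce a transversal outside `H`. For large `m` this is less than the number `(m - 1) ⋯ (m - k)` of
all tuples, as `α (k + 1) ^ (k + 1) < 1`, and any other tuple improves the partition.
-/

lemma exists_perm_apply_add {ι κ : Type*} [AddGroup ι] (τ : ι ↪ κ) :
    ∃ ρ : ι → Equiv.Perm κ, (∀ j l, ρ j (τ l) = τ (l + j)) ∧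
      ∀ j, ∀ i ∉ Set.range τ, ρ j i = i :=
  ⟨fun j => (Equiv.addRight j : Equiv.Perm ι).viaEmbedding τ,
    fun _ l => Equiv.Perm.viaEmbedding_apply _ _ l,
    fun _ i hi => Equiv.Perm.viaEmbedding_apply_of_notMem _ _ i hi⟩

section Transversals

open Finset Fintype

variable {ι κ : Type*} [Fintype ι] [Fintype κ] [DecidableEq κ]

lemma card_mul_card_embedding_apply_eq (a : ι) (b : κ) :
    card κ * #{τ : ι ↪ κ | τ a = b} = (card κ).descFactorial (card ι) := by
  classical
  have fibre_card (c : κ) : #{τ : ι ↪ κ | τ a = c} = #{τ : ι ↪ κ | τ a = b} :=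
    card_equiv ((Equiv.refl ι).embeddingCongr (Equiv.swap c b)) fun τ => by
      simp [← Equiv.eq_symm_apply]
  calc card κ * #{τ : ι ↪ κ | τ a = b}
      = ∑ c, #{τ : ι ↪ κ | τ a = c} := by simp [fibre_card]
    _ = card (ι ↪ κ) := (card_eq_sum_card_fiberwise fun _ _ => mem_coe.2 (mem_univ _)).symm
    _ = (card κ).descFactorial (card ι) := card_embedding_eq

variable [DecidableEq ι] (F : (ι → κ) → Prop) [DecidablePred F]

lemma card_not_relabel_eq (σ : ι → Equiv.Perm κ) (j : ι) (i : κ) :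
    #{f : ι → κ | f j = i ∧ ¬ F (fun j => σ j (f j))} =
      #{f : ι → κ | f j = σ j i ∧ ¬ F f} :=
  card_equiv (Equiv.piCongrRight σ) fun f => by
    simp only [mem_filter_univ]
    exact and_congr (σ j).apply_eq_iff_eq.symm Iff.rfl

variable [AddGroup ι]

lemma card_embedding_not_rotate_le (i : κ) (l : ι) :
    #{τ : ι ↪ κ | τ 0 = i ∧ ¬ F (fun j => τ (l + j))} ≤ #{f : ι → κ | f (-l) = i ∧ ¬ F f} := by
  refine card_le_card_of_injOn (fun τ j => τ (l + j)) (fun τ hτ => ?_) fun τ₁ _ τ₂ _ h => ?_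
  · simpa using hτ
  · ext j
    simpa using congrFun h (-l + j)

variable {F}

lemma exists_embedding_forall_rotate
    (hF : ∀ j i, card ι * card κ * #{f : ι → κ | f j = i ∧ ¬ F f} <
      (card κ).descFactorial (card ι)) (i : κ) :
    ∃ τ : ι ↪ κ, τ 0 = i ∧ ∀ l, F (fun j => τ (l + j)) := by
  by_contra! hbad
  have cover : ({τ | τ 0 = i} : Finset (ι ↪ κ)) ⊆
      univ.biUnion fun l => {τ | τ 0 = i ∧ ¬ F (fun j => τ (l + j))} := by
    intro τ hτ
    have hτ₀ : τ 0 = i := by simpa using hτ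
    simpa [hτ₀] using hbad τ hτ₀
  have union_bound : #{τ : ι ↪ κ | τ 0 = i} ≤ ∑ l : ι, #{f : ι → κ | f (-l) = i ∧ ¬ F f} :=
    (card_le_card cover).trans <| card_biUnion_le.trans <|
      sum_le_sum fun l _ => card_embedding_not_rotate_le F i l
  refine lt_irrefl (card ι * (card κ).descFactorial (card ι)) ?_
  calc card ι * (card κ).descFactorial (card ι)
      = card ι * card κ * #{τ : ι ↪ κ | τ 0 = i} := by
        rw [mul_assoc, card_mul_card_embedding_apply_eq]
    _ ≤ ∑ l : ι, card ι * card κ * #{f : ι → κ | f (-l) = i ∧ ¬ F f} := by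
        rw [← mul_sum]
        gcongr
    _ < ∑ _l : ι, (card κ).descFactorial (card ι) :=
        sum_lt_sum_of_nonempty univ_nonempty fun l _ => hF (-l) i
    _ = card ι * (card κ).descFactorial (card ι) := by simp

/-- The improvement step, for the partition of `ι × κ` into the constant transversals; relabelling
the parts reduces an arbitrary partition to it. -/
lemma exists_perm_filter_ssubset
    (hF : ∀ j i, card ι * card κ * #{f : ι → κ | f j = i ∧ ¬ F f} <
      (card κ).descFactorial (card ι)) {i : κ} (hi : ¬ F (fun _ => i)) :
    ∃ ρ : ι → Equiv.Perm κ,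
      ({i | F (fun _ => i)} : Finset κ) ⊂ ({i | F (fun j => ρ j i)} : Finset κ) := by
  obtain ⟨τ, rfl, hτ⟩ := exists_embedding_forall_rotate hF i
  obtain ⟨ρ, hρ, hρ_fix⟩ := exists_perm_apply_add τ
  have good_on_range (l) : F (fun j => ρ j (τ l)) := by
    simpa only [hρ] using hτ l
  refine ⟨ρ, (ssubset_iff_of_subset fun i' hi' => ?_).2
    ⟨τ 0, by simpa using good_on_range 0, by simpa using hi⟩⟩
  by_cases hmem : i' ∈ Set.range τ
  · obtain ⟨l, rfl⟩ := hmem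
    simpa using good_on_range l
  · simpa [hρ_fix _ i' hmem] using hi'

/-- The permutations `σ j` encode the partition of `ι × κ` into the transversals
`fun j => σ j i`. -/
theorem exists_perm_forall_of_card_mul_lt
    (hF : ∀ j i, card ι * card κ * #{f : ι → κ | f j = i ∧ ¬ F f} <
      (card κ).descFactorial (card ι)) :
    ∃ σ : ι → Equiv.Perm κ, ∀ i, F (fun j => σ j i) := by
  obtain ⟨σ, -, hσ⟩ := exists_max_image univ
    (fun σ : ι → Equiv.Perm κ => #{i | F (fun j => σ j i)}) univ_nonempty
  refine ⟨σ, ?_⟩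
  by_contra! ⟨i, hi⟩
  obtain ⟨ρ, hρ⟩ := exists_perm_filter_ssubset
    (F := fun f => F (fun j => σ j (f j)))
    (fun j i => (card_not_relabel_eq F σ j i).symm ▸ hF j (σ j i)) hi
  exact (hσ (fun j => (ρ j).trans (σ j)) (mem_univ _)).not_gt (card_lt_card hρ)

end Transversals

/-- A perfect matching: pairwise disjoint edges covering every vertex. -/
def IsPerfectMatching {V : Type*} (M : Finset (Finset V)) : Prop :=
  (M : Set (Finset V)).Pairwise (fun a b => Disjoint a b) ∧ ∀ v, ∃ e ∈ M, v ∈ e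

lemma erase_mem_linkOf_iff {V : Type*} [DecidableEq V] {H : Finset (Finset V)} {e : Finset V}
    {v : V} (hv : v ∈ e) : e.erase v ∈ linkOf H v ↔ e ∈ H := by
  simp only [linkOf, Finset.mem_image, Finset.mem_filter]
  refine ⟨?_, fun he => ⟨e, ⟨he, hv⟩, rfl⟩⟩
  rintro ⟨e', ⟨he', hv'⟩, h⟩
  rwa [← Finset.insert_erase hv, ← h, Finset.insert_erase hv']

section PartiteHypergraph

open Finset Fintype

variable {ι κ V : Type*} [Fintype ι] [DecidableEq V]

/-- The transversal edge containing from each part `j` its vertex number `f j`. The partition of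
the vertex set `V` into parts indexed by `ι`, each numbered by `κ`, is encoded by the bijection
`Φ`. -/
def transversalEdge (Φ : ι × κ ≃ V) (f : ι → κ) : Finset V :=
  univ.image fun j => Φ (j, f j)

variable {Φ : ι × κ ≃ V}

lemma mem_transversalEdge {f : ι → κ} {j : ι} {i : κ} :
    Φ (j, i) ∈ transversalEdge Φ f ↔ f j = i := by
  simp [transversalEdge]

variable (Φ) in
lemma transversalEdge_injective : Function.Injective (transversalEdge Φ) := by
  intro f g h
  funext j
  exact (mem_transversalEdge.1 (h ▸ mem_transversalEdge.2 rfl : Φ (j, f j) ∈ _)).symm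

lemma isPerfectMatching_image_transversalEdge [Fintype κ] (σ : ι → Equiv.Perm κ) :
    IsPerfectMatching (univ.image fun i => transversalEdge Φ fun j => σ j i) := by
  constructor
  · simp only [coe_image, coe_univ, Set.image_univ]
    rintro _ ⟨i, rfl⟩ _ ⟨i', rfl⟩ hne
    refine disjoint_left.2 fun v hv hv' => hne ?_
    obtain ⟨⟨j, w⟩, rfl⟩ := Φ.surjective v
    rw [mem_transversalEdge] at hv hv'
    rw [(σ j).injective (hv.trans hv'.symm)]
  · intro v
    obtain ⟨⟨j, w⟩, rfl⟩ := Φ.surjective v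
    exact ⟨_, mem_image_of_mem _ (mem_univ ((σ j).symm w)), mem_transversalEdge.2 (by simp)⟩

variable [Fintype κ] {G H : Finset (Finset V)}

lemma card_transversalEdge_notMem_le [DecidableEq ι] [DecidableEq κ]
    (hG : ∀ f, transversalEdge Φ f ∈ G) (j : ι) (i : κ) :
    #{f : ι → κ | f j = i ∧ transversalEdge Φ f ∉ H} ≤
      #(linkOf G (Φ (j, i)) \ linkOf H (Φ (j, i))) := by
  refine card_le_card_of_injOn (fun f => (transversalEdge Φ f).erase (Φ (j, i))) ?_ ?_
  · intro f hf
    obtain ⟨hfj, hfH⟩ : f j = i ∧ transversalEdge Φ f ∉ H := by simpa using hf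
    simpa [erase_mem_linkOf_iff (mem_transversalEdge.2 hfj)] using ⟨hG f, hfH⟩
  · intro f hf g hg h
    obtain ⟨hfj, -⟩ : f j = i ∧ transversalEdge Φ f ∉ H := by simpa using hf
    obtain ⟨hgj, -⟩ : g j = i ∧ transversalEdge Φ g ∉ H := by simpa using hg
    exact transversalEdge_injective Φ <|
      erase_injOn' _ (mem_transversalEdge.2 hfj) (mem_transversalEdge.2 hgj) h

theorem exists_isPerfectMatching_of_card_linkOf_sdiff_lt [AddGroup ι]
    (hG : ∀ f, transversalEdge Φ f ∈ G)
    (hH : ∀ v, card ι * card κ * #(linkOf G v \ linkOf H v) <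
      (card κ).descFactorial (card ι)) :
    ∃ M ⊆ H, IsPerfectMatching M := by
  classical
  obtain ⟨σ, hσ⟩ := exists_perm_forall_of_card_mul_lt
    (F := fun f => transversalEdge Φ f ∈ H) fun j i =>
      (Nat.mul_le_mul_left _ (card_transversalEdge_notMem_le hG j i)).trans_lt (hH (Φ (j, i)))
  exact ⟨_, by simpa [image_subset_iff] using hσ, isPerfectMatching_image_transversalEdge σ⟩

end PartiteHypergraph

/-- The vertex set of `calHk n k` split into `k + 1` parts of size `n / k`: part `0` is `X`, and
part `j + 1` is the `j`-th of the `k` consecutive intervals of length `n / k` in `[n]`. -/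
def partsEquiv {n k : ℕ} (h : k * (n / k) = n) :
    Fin (k + 1) × Fin (n / k) ≃ Fin (n / k) ⊕ Fin n :=
  ((finSuccEquiv k).prodCongr (Equiv.refl _)).trans <|
    optionProdEquiv.trans <| (Equiv.refl _).sumCongr <| finProdFinEquiv.trans (finCongr h)

lemma partsEquiv_zero {n k : ℕ} (h : k * (n / k) = n) (i : Fin (n / k)) :
    partsEquiv h (0, i) = Sum.inl i := rfl

lemma partsEquiv_succ {n k : ℕ} (h : k * (n / k) = n) (j : Fin k) (i : Fin (n / k)) :
    partsEquiv h (j.succ, i) = Sum.inr (finCongr h (finProdFinEquiv (j, i))) := rfl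

lemma transversalEdge_partsEquiv_mem_calHk {n k : ℕ} (hk : 2 ≤ k) (h : k * (n / k) = n)
    (f : Fin (k + 1) → Fin (n / k)) : transversalEdge (partsEquiv h) f ∈ calHk n k := by
  let y (j : Fin k) : Fin n := finCongr h (finProdFinEquiv (j, f j.succ))
  have y_injective : Function.Injective y := fun _ _ hab =>
    congrArg Prod.fst (finProdFinEquiv.injective ((finCongr h).injective hab))
  have val_y (j) : (y j : ℕ) = f j.succ + n / k * j := rfl
  have edge_eq : insert (Sum.inl (f 0)) ((Finset.univ.image y).image Sum.inr) =
      transversalEdge (partsEquiv h) f := by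
    ext v
    simp only [transversalEdge, Finset.mem_insert, Finset.mem_image, Finset.mem_univ, true_and,
      exists_exists_eq_and, Fin.exists_fin_succ, partsEquiv_zero, partsEquiv_succ, y,
      eq_comm (b := v)]
  simp only [calHk, Finset.mem_biUnion, Finset.mem_univ, true_and, Finset.mem_image,
    Finset.mem_filter, Finset.mem_powersetCard_univ]
  refine ⟨f 0, Finset.univ.image y, ⟨?_, ⟨y ⟨0, by omega⟩, by simp, ?_⟩,
    ⟨y ⟨1, by omega⟩, by simp, ?_⟩⟩, edge_eq⟩
  · rw [Finset.card_image_of_injective _ y_injective, Finset.card_fin]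
  · simp [val_y]
  · simp [val_y]

open Filter in
lemma eventually_mul_pow_lt_descFactorial {c : ℝ} (hc : c < 1) (k : ℕ) :
    ∀ᶠ m : ℕ in atTop, c * (m : ℝ) ^ k < m.descFactorial k := by
  have ratio_tendsto :
      Tendsto (fun m : ℕ => (m.descFactorial k : ℝ) / (m : ℝ) ^ k) atTop (nhds 1) := by
    refine (Asymptotics.isEquivalent_iff_tendsto_one ?_).1 (isEquivalent_descFactorial k)
    filter_upwards [eventually_gt_atTop 0] with m hm
    positivity
  filter_upwards [ratio_tendsto.eventually_const_lt hc, eventually_gt_atTop 0] with m hlt hm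
  exact (lt_div_iff₀ (by positivity)).1 hlt

lemma succ_pow_succ_le_mul_factorial {k : ℕ} (hk : 1 ≤ k) :
    ((k : ℝ) + 1) ^ (k + 1) ≤ (10 : ℝ) ^ k * (k : ℝ) ^ k * (Nat.factorial (k + 1) : ℝ) := by
  have base_le : (k : ℝ) + 1 ≤ 10 * k := by
    have : (1 : ℝ) ≤ k := by exact_mod_cast hk
    linarith
  have le_factorial : (k : ℝ) + 1 ≤ (k + 1).factorial := by
    exact_mod_cast Nat.self_le_factorial (k + 1)
  rw [pow_succ, ← mul_pow]
  gcongr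

theorem perfect_matching_of_all_good_general {k : ℕ} (hk : 2 ≤ k) {α : ℝ}
    (hα : α < (((k : ℝ) + 1) ^ (k + 1))⁻¹) :
    ∃ N : ℕ, ∀ n : ℕ, N ≤ n → k ∣ n → ∀ H : Finset (Finset (Fin (n / k) ⊕ Fin n)),
      (∀ v, ((linkOf (calHk n k) v \ linkOf H v).card : ℝ) ≤ α * ((n + n / k : ℕ) : ℝ) ^ k) →
      ∃ M ⊆ H, IsPerfectMatching M := by
  have hc : α * ((k : ℝ) + 1) ^ (k + 1) < 1 :=
    (lt_mul_inv_iff₀ (by positivity)).1 (by rwa [one_mul])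
  obtain ⟨m₀, hm₀⟩ :=
    Filter.eventually_atTop.1 (eventually_mul_pow_lt_descFactorial hc (k + 1))
  refine ⟨m₀ * k, fun n hn hkn H hgood => ?_⟩
  have h : k * (n / k) = n := Nat.mul_div_cancel' hkn
  have hm : m₀ ≤ n / k := (Nat.le_div_iff_mul_le (by omega)).2 hn
  have card_vertices : n + n / k = (k + 1) * (n / k) := by rw [add_mul, h, one_mul]
  refine exists_isPerfectMatching_of_card_linkOf_sdiff_lt
    (transversalEdge_partsEquiv_mem_calHk hk h) fun v => ?_
  rw [Fintype.card_fin, Fintype.card_fin]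
  suffices ((k : ℝ) + 1) * (n / k : ℕ) * (linkOf (calHk n k) v \ linkOf H v).card <
      (n / k).descFactorial (k + 1) by exact_mod_cast this
  calc ((k : ℝ) + 1) * (n / k : ℕ) * (linkOf (calHk n k) v \ linkOf H v).card
      ≤ ((k : ℝ) + 1) * (n / k : ℕ) * (α * (((k : ℝ) + 1) * (n / k : ℕ)) ^ k) := by
        gcongr
        exact_mod_cast card_vertices ▸ hgood v
    _ = α * ((k : ℝ) + 1) ^ (k + 1) * (n / k : ℕ) ^ (k + 1) := by rw [mul_pow]; ring
    _ < (n / k).descFactorial (k + 1) := hm₀ _ hm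

/-- Let `k ≥ 2`, `0 < α < (10^k · k^k · (k+1)!)⁻¹`, and let `n ≡ 0 (mod k)`
be sufficiently large in terms of `α`. If `H` is a balanced `(1,k)`-partite
`(k+1)`-graph on the vertex set of `𝓗_k(n, n/k)` (same partition classes) in which
every vertex is `α`-good with respect to `𝓗_k(n, n/k)` (i.e.
`|N_{𝓗}(v) \ N_H(v)| ≤ α · |V|^k`), then `H` has a perfect matching. -/
theorem perfect_matching_of_all_good (k : ℕ) (hk : 2 ≤ k) (α : ℝ)
    (hα0 : 0 < α)
    (hα1 : α < ((10 : ℝ) ^ k * (k : ℝ) ^ k * (Nat.factorial (k + 1) : ℝ))⁻¹) :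
    ∃ N : ℕ, ∀ n : ℕ, N ≤ n → k ∣ n →
    ∀ H : Finset (Finset (Fin (n / k) ⊕ Fin n)),
      (∀ e ∈ H, ∃ (x : Fin (n / k)) (s : Finset (Fin n)),
        s.card = k ∧ e = insert (Sum.inl x) (s.image Sum.inr)) →
      (∀ v : Fin (n / k) ⊕ Fin n,
        (((linkOf (calHk n k) v) \ (linkOf H v)).card : ℝ)
          ≤ α * ((n + n / k : ℕ) : ℝ) ^ k) →
      ∃ M ⊆ H, (M : Set (Finset (Fin (n / k) ⊕ Fin n))).Pairwise (fun a b => Disjoint a b) ∧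
        (∀ v : Fin (n / k) ⊕ Fin n, ∃ e ∈ M, v ∈ e) := by
  obtain ⟨N, hN⟩ := perfect_matching_of_all_good_general hk
    (hα1.trans_le (inv_anti₀ (by positivity) (succ_pow_succ_le_mul_factorial (by omega))))
  exact ⟨N, fun n hn hkn H _ hgood => hN n hn hkn H hgood⟩
end

section
/- Let n, t, k be positive integers such that n > 2k^4 t. For each i ∈ [t], let G_i ⊆ binom([n],k) be a k-graph with δ_1(G_i) > binom(n-1,k-1) - binom(n-t,k-1). Then the family {G_1, ..., G_t} admits a rainbow matching, i.e., there exist pairwise disjoint edges e_1, ..., e_t with e_i ∈ G_i for each i. -/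
/-!
Induct on the number `t` of families of `k`-sets on `n` vertices, where `k ≥ 2`. Suppose first
that a vertex `v` lies in more than `(t - 1) * k * C(n - 2, k - 2)` edges of some `G i`. Deleting
`v` costs every other vertex at most `C(n - 2, k - 2)` edges of each family, which is exactly the
drop of the degree bound when `n` and `t` both decrease by one, so the other `t - 1` families have a
rainbow matching avoiding `v`. It covers `(t - 1) * k` vertices, each of which lies in at most
`C(n - 2, k - 2)` of the edges of `G i` through `v`, so one of those edges completes the matching.

If there is no such vertex, all maximum degrees are small, while summing the minimum degrees gives
`|G i| > n * (t - 1) * C(n - t, k - 2) / k`. Since `C(n - 2, k - 2) ≤ 2 * C(n - t, k - 2)` by a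
union bound, this is at least `(t - 1) * k` times the maximum degree as soon as `n > 2 * k ^ 3 * t`,
and edges can be chosen greedily.
-/

lemma choose_succ_add_mul_choose_le (a m r : ℕ) :
    a.choose (m + 1) + r * a.choose m ≤ (a + r).choose (m + 1) := by
  induction r with
  | zero => simp
  | succ r ih =>
    have hmono : a.choose m ≤ (a + r).choose m := Nat.choose_le_choose m (Nat.le_add_right a r)
    rw [← Nat.add_assoc, Nat.choose_succ_succ']
    linarith

/-- The union bound for a uniformly random `m`-subset of an `n`-set to meet a fixed `r`-set, with
denominators cleared. -/
lemma mul_choose_le_mul_choose_sub_add (n r m : ℕ) :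
    n * n.choose m ≤ n * (n - r).choose m + r * m * n.choose m := by
  induction r with
  | zero => simp
  | succ r ih =>
    suffices hstep : n * (n - r).choose m ≤ n * (n - (r + 1)).choose m + m * n.choose m by
      linarith
    rcases Nat.eq_zero_or_pos (n - r) with hr | hr
    · simp [hr, Nat.sub_add_eq]
    obtain ⟨p, rfl⟩ : ∃ p, n = p + 1 + r := ⟨n - r - 1, by omega⟩
    rcases m with _ | b
    · simp
    have hmono : p.choose b ≤ (p + r).choose b := Nat.choose_le_choose b (Nat.le_add_right p r)
    rw [Nat.add_sub_cancel, show p + 1 + r - (r + 1) = p by omega, Nat.choose_succ_succ',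
      show p + 1 + r = p + r + 1 by omega]
    calc (p + r + 1) * (p.choose b + p.choose (b + 1))
        = (p + r + 1) * p.choose (b + 1) + (p + r + 1) * p.choose b := by ring
      _ ≤ (p + r + 1) * p.choose (b + 1) + (p + r + 1) * (p + r).choose b := by gcongr
      _ = (p + r + 1) * p.choose (b + 1) + (b + 1) * (p + r + 1).choose (b + 1) := by
        rw [Nat.add_one_mul_choose_eq, mul_comm (b + 1)]

lemma choose_add_le_two_mul_choose {a r m : ℕ} (h : 2 * (r * m) ≤ a + r) :
    (a + r).choose m ≤ 2 * a.choose m := by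
  rcases Nat.eq_zero_or_pos r with rfl | hr
  · exact Nat.le_mul_of_pos_left _ two_pos
  have hunion := mul_choose_le_mul_choose_sub_add (a + r) r m
  rw [Nat.add_sub_cancel] at hunion
  refine Nat.le_of_mul_le_mul_left ?_ (Nat.add_pos_right a hr)
  have hhalf := Nat.mul_le_mul_right ((a + r).choose m) h
  linarith

section RainbowMatching

open Finset

variable {α ι : Type*} [DecidableEq α]

/-- The degree of the vertex `v` in the hypergraph with edge set `G`. -/
def vertexDegree (G : Finset (Finset α)) (v : α) : ℕ :=
  #{e ∈ G | v ∈ e}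

lemma card_mul_le_card_mul_of_le_vertexDegree {G : Finset (Finset α)} {V : Finset α} {d k : ℕ}
    (hG : ∀ e ∈ G, #e ≤ k) (hd : ∀ v ∈ V, d ≤ vertexDegree G v) : #V * d ≤ #G * k :=
  calc #V * d ≤ ∑ e ∈ G, #(V ∩ e) := le_sum_card_inter hd
    _ ≤ #G * k := sum_le_card_nsmul _ _ _ fun e he ↦
      (card_le_card inter_subset_right).trans (hG e he)

lemma exists_disjoint_of_card_mul_lt_card {G : Finset (Finset α)} {S : Finset α} {Δ : ℕ}
    (hΔ : ∀ v ∈ S, vertexDegree G v ≤ Δ) (hcard : #S * Δ < #G) : ∃ e ∈ G, Disjoint e S := by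
  by_contra! hmeet
  refine hcard.not_ge ?_
  calc #G = ∑ _e ∈ G, 1 := card_eq_sum_ones G
    _ ≤ ∑ e ∈ G, #(S ∩ e) := sum_le_sum fun e he ↦ by
      rw [Nat.one_le_iff_ne_zero, Ne, card_eq_zero, ← disjoint_iff_inter_eq_empty, disjoint_comm]
      exact hmeet e he
    _ ≤ #S * Δ := sum_card_inter_le hΔ

lemma card_filter_superset_le {G : Finset (Finset α)} {V : Finset α} {k : ℕ}
    (hG : G ⊆ V.powersetCard k) (T : Finset α) :
    #{e ∈ G | T ⊆ e} ≤ (#V - #T).choose (k - #T) := by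
  by_cases hTV : T ⊆ V
  · rw [← card_sdiff_of_subset hTV, ← card_powersetCard]
    refine card_le_card_of_injOn (· \ T) (fun e he ↦ ?_) fun e he f hf hef ↦ ?_
    · obtain ⟨heG, hTe⟩ := mem_filter.mp he
      obtain ⟨heV, hek⟩ := mem_powersetCard.mp (hG heG)
      exact mem_powersetCard.mpr
        ⟨sdiff_subset_sdiff heV subset_rfl, by rw [card_sdiff_of_subset hTe, hek]⟩
    · rw [← sdiff_union_of_subset (mem_filter.mp he).2,
        ← sdiff_union_of_subset (mem_filter.mp hf).2]
      exact congrArg (· ∪ T) hef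
  · rw [filter_false_of_mem fun e he hTe ↦ hTV (hTe.trans (mem_powersetCard.mp (hG he)).1)]
    exact Nat.zero_le _

section Codegree

variable {G : Finset (Finset α)} {V : Finset α} {m : ℕ} {u v : α}

lemma vertexDegree_filter_mem_le (hG : G ⊆ V.powersetCard (m + 2)) (huv : u ≠ v) :
    vertexDegree {e ∈ G | v ∈ e} u ≤ (#V - 2).choose m := by
  have hcodegree := card_filter_superset_le hG {v, u}
  rw [card_pair huv.symm, Nat.add_sub_cancel] at hcodegree
  simpa only [vertexDegree, filter_filter, insert_subset_iff, singleton_subset_iff] using hcodegree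

lemma vertexDegree_le_vertexDegree_nonMemberSubfamily_add (hG : G ⊆ V.powersetCard (m + 2))
    (huv : u ≠ v) :
    vertexDegree G u ≤ vertexDegree (G.nonMemberSubfamily v) u + (#V - 2).choose m := by
  have hcodegree := vertexDegree_filter_mem_le hG huv
  have hsplit := card_filter_add_card_filter_not (s := {e ∈ G | u ∈ e}) (v ∈ ·)
  rw [filter_comm, filter_comm _ (v ∉ ·)] at hsplit
  simp only [vertexDegree, nonMemberSubfamily] at hcodegree ⊢
  omega

lemma nonMemberSubfamily_subset_powersetCard_erase {k : ℕ} (hG : G ⊆ V.powersetCard k) (v : α) :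
    G.nonMemberSubfamily v ⊆ (V.erase v).powersetCard k := by
  intro e he
  obtain ⟨heG, hve⟩ := mem_nonMemberSubfamily.mp he
  obtain ⟨heV, hek⟩ := mem_powersetCard.mp (hG heG)
  exact mem_powersetCard.mpr ⟨subset_erase.mpr ⟨heV, hve⟩, hek⟩

lemma lt_vertexDegree_nonMemberSubfamily_add {s : ℕ} (hG : G ⊆ V.powersetCard (m + 2))
    (hv : v ∈ V) (hu : u ∈ V.erase v)
    (hδ : (#V - 1).choose (m + 1) < vertexDegree G u + (#V - (s + 1)).choose (m + 1)) :
    (#(V.erase v) - 1).choose (m + 1) <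
      vertexDegree (G.nonMemberSubfamily v) u + (#(V.erase v) - s).choose (m + 1) := by
  have hloss := vertexDegree_le_vertexDegree_nonMemberSubfamily_add hG (ne_of_mem_erase hu)
  have hV : 0 < #(V.erase v) := card_pos.mpr ⟨u, hu⟩
  rw [← card_erase_add_one hv] at hδ hloss
  obtain ⟨p, hp⟩ := Nat.exists_eq_add_of_lt hV
  simp only [hp, Nat.zero_add, Nat.add_sub_cancel, Nat.add_sub_add_right, Nat.reduceSubDiff]
    at hδ hloss ⊢
  rw [Nat.choose_succ_succ'] at hδ
  omega

end Codegree

/-- `e` is a rainbow matching of the families `G i`, `i ∈ I`: it picks an edge `e i` of each of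
them, and these edges are pairwise disjoint. The values of `e` outside `I` are irrelevant. -/
structure IsRainbowMatching (I : Finset ι) (G : ι → Finset (Finset α)) (e : ι → Finset α) :
    Prop where
  mem : ∀ i ∈ I, e i ∈ G i
  pairwiseDisjoint : (I : Set ι).PairwiseDisjoint e

namespace IsRainbowMatching

variable {I : Finset ι} {G : ι → Finset (Finset α)} {e : ι → Finset α}

lemma card_biUnion_le {k : ℕ} (he : IsRainbowMatching I G e) (hG : ∀ i ∈ I, ∀ f ∈ G i, #f ≤ k) :
    #(I.biUnion e) ≤ #I * k :=
  card_biUnion_le_card_mul _ _ _ fun i hi ↦ hG i hi _ (he.mem i hi)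

lemma insert [DecidableEq ι] {a : ι} {f : Finset α} (he : IsRainbowMatching I G e) (ha : a ∉ I)
    (hf : f ∈ G a) (hdisj : Disjoint f (I.biUnion e)) :
    IsRainbowMatching (insert a I) G (Function.update e a f) := by
  have hupdate : ∀ i ∈ I, Function.update e a f i = e i := fun i hi ↦
    Function.update_of_ne (ne_of_mem_of_not_mem hi ha) _ _
  refine ⟨forall_mem_insert _ _ _ |>.mpr ⟨?_, fun i hi ↦ ?_⟩, ?_⟩
  · simpa using hf
  · rw [hupdate i hi]
    exact he.mem i hi
  · rw [coe_insert, Set.pairwiseDisjoint_insert_of_notMem (mem_coe.not.mpr ha)]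
    refine ⟨fun i hi j hj hij ↦ ?_, fun i hi ↦ ?_⟩
    · simpa only [Function.onFun, hupdate i hi, hupdate j hj] using he.pairwiseDisjoint hi hj hij
    · simpa [hupdate i hi] using (disjoint_biUnion_right _ _ _).mp hdisj i hi

end IsRainbowMatching

lemma exists_isRainbowMatching_of_vertexDegree_le {I : Finset ι} {G : ι → Finset (Finset α)}
    {k Δ : ℕ} (hG : ∀ i ∈ I, ∀ e ∈ G i, #e ≤ k) (hΔ : ∀ i ∈ I, ∀ v, vertexDegree (G i) v ≤ Δ)
    (hcard : ∀ i ∈ I, (#I - 1) * k * Δ < #(G i)) : ∃ e, IsRainbowMatching I G e := by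
  classical
  induction I using Finset.induction_on with
  | empty => exact ⟨fun _ ↦ ∅, by simp, by simp⟩
  | insert a I ha ih =>
    rw [card_insert_of_notMem ha, Nat.add_sub_cancel] at hcard
    rw [forall_mem_insert] at hG hΔ hcard
    have hmono : (#I - 1) * k * Δ ≤ #I * k * Δ := by gcongr; exact Nat.sub_le _ _
    obtain ⟨e, he⟩ := ih hG.2 hΔ.2 fun i hi ↦ hmono.trans_lt (hcard.2 i hi)
    obtain ⟨f, hf, hdisj⟩ := exists_disjoint_of_card_mul_lt_card (S := I.biUnion e)
      (fun v _ ↦ hΔ.1 v)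
      ((Nat.mul_le_mul_right Δ (he.card_biUnion_le hG.2)).trans_lt hcard.1)
    exact ⟨_, he.insert ha hf hdisj⟩

lemma exists_isRainbowMatching_of_nonMemberSubfamily [DecidableEq ι] {I : Finset ι} {V : Finset α}
    {G : ι → Finset (Finset α)} {m : ℕ} (hG : ∀ i ∈ I, G i ⊆ V.powersetCard (m + 2)) {i : ι}
    (hi : i ∈ I) {v : α} (hv : (#I - 1) * (m + 2) * (#V - 2).choose m < vertexDegree (G i) v)
    {e : ι → Finset α}
    (he : IsRainbowMatching (I.erase i) (fun j ↦ (G j).nonMemberSubfamily v) e) :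
    ∃ e, IsRainbowMatching I G e := by
  have hmem : ∀ j ∈ I.erase i, e j ∈ G j ∧ v ∉ e j := fun j hj ↦
    mem_nonMemberSubfamily.mp (he.mem j hj)
  have heG : IsRainbowMatching (I.erase i) G e := ⟨fun j hj ↦ (hmem j hj).1, he.pairwiseDisjoint⟩
  have hcovered : #((I.erase i).biUnion e) ≤ (#I - 1) * (m + 2) := by
    rw [← card_erase_of_mem hi]
    exact heG.card_biUnion_le fun j hj f hf ↦
      (mem_powersetCard.mp (hG j (mem_of_mem_erase hj) hf)).2.le
  obtain ⟨f, hf, hdisj⟩ : ∃ f ∈ ({f ∈ G i | v ∈ f} : Finset (Finset α)),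
      Disjoint f ((I.erase i).biUnion e) := by
    refine exists_disjoint_of_card_mul_lt_card (fun u hu ↦ vertexDegree_filter_mem_le (hG i hi) ?_)
      ((Nat.mul_le_mul_right _ hcovered).trans_lt hv)
    rintro rfl
    obtain ⟨j, hj, huj⟩ := mem_biUnion.mp hu
    exact (hmem j hj).2 huj
  refine ⟨Function.update e i f, ?_⟩
  rw [← insert_erase hi]
  exact heG.insert (notMem_erase i I) (mem_of_mem_filter f hf) hdisj

/-- One factor `s * (m + 2)` counts the vertices covered by `s` edges; the other comes from the
maximum degree `s * (m + 2) * C(n - 2, m)` of the greedy case. -/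
lemma sq_mul_choose_lt_card_of_lt_vertexDegree_add {G : Finset (Finset α)} {V : Finset α} {m s : ℕ}
    (hV : 2 * (m + 2) ^ 3 * (s + 1) < #V) (hG : ∀ e ∈ G, #e ≤ m + 2)
    (hδ : ∀ v ∈ V, (#V - 1).choose (m + 1) < vertexDegree G v + (#V - (s + 1)).choose (m + 1)) :
    (s * (m + 2)) ^ 2 * (#V - 2).choose m < #G := by
  have hpow : m + 2 ≤ (m + 2) ^ 3 := Nat.le_self_pow (by norm_num) _
  have hsm : 2 * (s * m) + (s + 1) ≤ #V := by nlinarith [Nat.mul_le_mul_right (s + 1) hpow]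
  obtain ⟨a, ha⟩ : ∃ a, #V = a + s + 1 := ⟨#V - (s + 1), by omega⟩
  have hVs : #V - (s + 1) = a := by omega
  have hV₁ : #V - 1 = a + s := by omega
  rw [hVs, hV₁] at hδ
  have hdeg : ∀ v ∈ V, s * a.choose m + 1 ≤ vertexDegree G v := fun v hv ↦ by
    have hdrop := choose_succ_add_mul_choose_le a m s
    have hmin := hδ v hv
    omega
  have hchoose : (#V - 2).choose m ≤ 2 * a.choose m :=
    (Nat.choose_le_choose m (by omega)).trans (choose_add_le_two_mul_choose (r := s) (by omega))
  refine lt_of_mul_lt_mul_right (a := m + 2) ?_ (Nat.zero_le _)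
  calc (s * (m + 2)) ^ 2 * (#V - 2).choose m * (m + 2)
      ≤ (s * (m + 2)) ^ 2 * (2 * a.choose m) * (m + 2) := by gcongr
    _ = 2 * (m + 2) ^ 3 * s * (s * a.choose m) := by ring
    _ ≤ 2 * (m + 2) ^ 3 * (s + 1) * (s * a.choose m) := by gcongr; exact Nat.le_succ s
    _ ≤ #V * (s * a.choose m) := by gcongr
    _ < #V * (s * a.choose m + 1) := Nat.mul_lt_mul_of_pos_left (Nat.lt_succ_self _) (by omega)
    _ ≤ #G * (m + 2) := card_mul_le_card_mul_of_le_vertexDegree hG hdeg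

lemma exists_isRainbowMatching_of_subset_powersetCard_one {I : Finset ι} {V : Finset α}
    {G : ι → Finset (Finset α)} (hV : #I ≤ #V) (hG : ∀ i ∈ I, G i ⊆ V.powersetCard 1)
    (hδ : ∀ i ∈ I, ∀ v ∈ V, 0 < vertexDegree (G i) v) : ∃ e, IsRainbowMatching I G e := by
  have hone : ∀ i ∈ I, ∀ e ∈ G i, #e ≤ 1 := fun i hi e he ↦
    (mem_powersetCard.mp (hG i hi he)).2.le
  refine exists_isRainbowMatching_of_vertexDegree_le (Δ := 1) hone (fun i hi v ↦ ?_) fun i hi ↦ ?_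
  · simpa [vertexDegree] using card_filter_superset_le (hG i hi) {v}
  · have hedges := card_mul_le_card_mul_of_le_vertexDegree (hone i hi) (hδ i hi)
    have hI : 0 < #I := card_pos.mpr ⟨i, hi⟩
    omega

lemma exists_isRainbowMatching_of_subset_powersetCard_add_two {m : ℕ} {I : Finset ι} {V : Finset α}
    {G : ι → Finset (Finset α)} (hV : 2 * (m + 2) ^ 3 * #I < #V)
    (hG : ∀ i ∈ I, G i ⊆ V.powersetCard (m + 2))
    (hδ : ∀ i ∈ I, ∀ v ∈ V,
      (#V - 1).choose (m + 1) < vertexDegree (G i) v + (#V - #I).choose (m + 1)) :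
    ∃ e, IsRainbowMatching I G e := by
  classical
  induction I using Finset.strongInduction generalizing V G with | H I ih => ?_
  by_cases hΔ : ∀ i ∈ I, ∀ v, vertexDegree (G i) v ≤ (#I - 1) * (m + 2) * (#V - 2).choose m
  · have hcard : ∀ i ∈ I, ∀ e ∈ G i, #e ≤ m + 2 := fun i hi e he ↦
      (mem_powersetCard.mp (hG i hi he)).2.le
    refine exists_isRainbowMatching_of_vertexDegree_le hcard hΔ fun i hi ↦ ?_
    rw [← mul_assoc, ← sq]
    rw [← card_erase_add_one hi] at hV hδ ⊢
    exact sq_mul_choose_lt_card_of_lt_vertexDegree_add hV (hcard i hi) (hδ i hi)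
  · push Not at hΔ
    obtain ⟨i, hi, v, hv⟩ := hΔ
    have hvV : v ∈ V := by
      obtain ⟨e, he⟩ := card_pos.mp (Nat.zero_lt_of_lt hv)
      obtain ⟨heG, hve⟩ := mem_filter.mp he
      exact (mem_powersetCard.mp (hG i hi heG)).1 hve
    have hV' : 2 * (m + 2) ^ 3 * #(I.erase i) < #(V.erase v) := by
      have hpow : 0 < (m + 2) ^ 3 := by positivity
      rw [← card_erase_add_one hi, ← card_erase_add_one hvV, mul_add] at hV
      omega
    obtain ⟨e, he⟩ := ih (I.erase i) (erase_ssubset hi) hV'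
      (fun j hj ↦ nonMemberSubfamily_subset_powersetCard_erase (hG j (mem_of_mem_erase hj)) v)
      fun j hj u hu ↦ by
        have hju := hδ j (mem_of_mem_erase hj) u (mem_of_mem_erase hu)
        rw [← card_erase_add_one hi] at hju
        exact lt_vertexDegree_nonMemberSubfamily_add (hG j (mem_of_mem_erase hj)) hvV hu hju
    exact exists_isRainbowMatching_of_nonMemberSubfamily hG hi hv he

lemma exists_isRainbowMatching_of_lt_vertexDegree_add {k : ℕ} {I : Finset ι} {V : Finset α}
    {G : ι → Finset (Finset α)} (hV : 2 * (k + 1) ^ 3 * #I < #V)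
    (hG : ∀ i ∈ I, G i ⊆ V.powersetCard (k + 1))
    (hδ : ∀ i ∈ I, ∀ v ∈ V, (#V - 1).choose k < vertexDegree (G i) v + (#V - #I).choose k) :
    ∃ e, IsRainbowMatching I G e := by
  rcases k with _ | m
  · exact exists_isRainbowMatching_of_subset_powersetCard_one (by omega) hG (by simpa using hδ)
  · exact exists_isRainbowMatching_of_subset_powersetCard_add_two hV hG hδ

theorem rainbow_matching_LYY_general [Fintype α] [Fintype ι] {k : ℕ} (hk : 1 ≤ k)
    (hn : 2 * k ^ 3 * Fintype.card ι < Fintype.card α) (G : ι → Finset (Finset α))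
    (hGk : ∀ i, ∀ e ∈ G i, #e = k)
    (hδ : ∀ i v, (Fintype.card α - 1).choose (k - 1) -
      (Fintype.card α - Fintype.card ι).choose (k - 1) < #{e ∈ G i | v ∈ e}) :
    ∃ e : ι → Finset α, (∀ i, e i ∈ G i) ∧ ∀ i j, i ≠ j → Disjoint (e i) (e j) := by
  obtain ⟨d, rfl⟩ := Nat.exists_eq_add_of_le' hk
  obtain ⟨e, he⟩ := exists_isRainbowMatching_of_lt_vertexDegree_add (I := univ) (V := univ) hn
    (fun i _ f hf ↦ mem_powersetCard.mpr ⟨f.subset_univ, hGk i f hf⟩)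
    (fun i _ v _ ↦ lt_add_of_tsub_lt_right (hδ i v))
  exact ⟨e, fun i ↦ he.mem i (mem_univ i), fun i j hij ↦
    he.pairwiseDisjoint (mem_univ i) (mem_univ j) hij⟩

end RainbowMatching

/-- Lu–Yu–Yuan: Let `n, t, k` be positive integers with `n > 2k⁴t`.
If `G₁,…,G_t ⊆ C([n],k)` satisfy `δ₁(Gᵢ) > C(n-1,k-1) - C(n-t,k-1)` for all `i`,
then `{G₁,…,G_t}` admits a rainbow matching. -/
theorem rainbow_matching_LYY (n t k : ℕ) (ht : 1 ≤ t) (hk : 1 ≤ k)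
    (hn : 2 * k ^ 4 * t < n)
    (G : Fin t → Finset (Finset (Fin n)))
    (hGk : ∀ i : Fin t, ∀ e ∈ G i, e.card = k)
    (hδ : ∀ (i : Fin t) (v : Fin n),
      Nat.choose (n - 1) (k - 1) - Nat.choose (n - t) (k - 1)
        < ((G i).filter (fun e => v ∈ e)).card) :
    ∃ e : Fin t → Finset (Fin n),
      (∀ i, e i ∈ G i) ∧ (∀ i j, i ≠ j → Disjoint (e i) (e j)) := by
  have hcubic : 2 * k ^ 3 * t < n := hn.trans_le' (by gcongr; omega)
  exact rainbow_matching_LYY_general hk (by simpa using hcubic) G hGk (by simpa using hδ)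
end

section
/- Let k ≥ 3 be an integer and 0 < b < 1/k a constant, and let n be sufficiently large in terms of k and b. Let H be a (1,k)-partite (k+1)-graph with partition classes X, [n], |X| = n/k, such that δ_1(N_H(x)) > (1/2 + b)·binom(n-1,k-1) for every x ∈ X. Then for every balanced (k+1)-subset R of V(H) (i.e., |R ∩ X| = 1 and |R ∩ [n]| = k), the number of R-absorbing sets is at least b^k · binom(n,k)^{k+1} / (2·(k^2)!). -/
/-- A perfect matching of the subhypergraph of `H` induced on the vertex set `Q`:
a set of pairwise disjoint edges of `H`, each contained in `Q`, covering `Q`. -/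
def HasPM {V : Type*} [DecidableEq V] (H : Finset (Finset V)) (Q : Finset V) : Prop :=
  ∃ M ⊆ H, (∀ e ∈ M, e ⊆ Q) ∧
    (M : Set (Finset V)).Pairwise (fun a b => Disjoint a b) ∧
    (∀ v ∈ Q, ∃ e ∈ M, v ∈ e)

/-!
Let `R = {x₀} ∪ V₀` with `V₀ = {v₁, …, v_k}`, and let `W = {w₁, …, w_k}` be a set disjoint from `V₀`
with `{x₀} ∪ W` an edge. Suppose that `q₁, …, q_k` are disjoint sets such that both `qᵢ ∪ {vᵢ}` and
`qᵢ ∪ {wᵢ}` are edges. Then `Q = W ∪ q₁ ∪ ⋯ ∪ q_k` is `R`-absorbing: `Q` is matched by the edges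
`qᵢ ∪ {wᵢ}`, and `Q ∪ R` by the edges `qᵢ ∪ {vᵢ}` together with `{x₀} ∪ W`.

At least half of the `k`-sets are admissible as `W`. For every `x`, the links of `vᵢ` and `wᵢ` in
`N_H(x)` both have density greater than `1/2 + b`, so their intersection has density about `2 * b`.
Summing over the `n / k` vertices `x` leaves at least `b * n.choose k` choices for `qᵢ`, even if
boundedly many vertices are forbidden, and so the `qᵢ` can be chosen greedily. Finally, a set `Q`
arises at most `k! * (k ^ 2)! / ((k - 1)! ^ k * k!) ≤ (k ^ 2)!` times, since the traces of the `qᵢ`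
on the two vertex classes determine `W` and `q₁, …, q_k`.
-/

section PerfectMatching

open Finset Function

variable {α : Type*} [DecidableEq α] {H : Finset (Finset α)}

theorem hasPM_empty : HasPM H ∅ :=
  ⟨∅, empty_subset H, by simp⟩

theorem hasPM_of_mem {e : Finset α} (he : e ∈ H) : HasPM H e :=
  ⟨{e}, singleton_subset_iff.2 he, by simp⟩

theorem HasPM.union {P Q : Finset α} (hP : HasPM H P) (hQ : HasPM H Q) (hPQ : Disjoint P Q) :
    HasPM H (P ∪ Q) := by
  obtain ⟨M, hMH, hMP, hM, hPM⟩ := hP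
  obtain ⟨M', hMH', hMQ, hM', hQM⟩ := hQ
  refine ⟨M ∪ M', union_subset hMH hMH', fun e he => ?_, ?_, fun v hv => ?_⟩
  · exact (mem_union.1 he).elim (fun h => (hMP e h).trans subset_union_left)
      fun h => (hMQ e h).trans subset_union_right
  · rw [coe_union, Set.pairwise_union_of_symm]
    exact ⟨hM, hM', fun e he f hf _ => disjoint_of_subset_left (hMP e he)
      (disjoint_of_subset_right (hMQ f hf) hPQ)⟩
  · obtain hv | hv := mem_union.1 hv
    · exact (hPM v hv).imp fun e he => ⟨mem_union_left _ he.1, he.2⟩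
    · exact (hQM v hv).imp fun e he => ⟨mem_union_right _ he.1, he.2⟩

theorem hasPM_biUnion {ι : Type*} {s : Finset ι} {e : ι → Finset α} (he : ∀ i ∈ s, e i ∈ H)
    (hd : (s : Set ι).PairwiseDisjoint e) : HasPM H (s.biUnion e) := by
  classical
  induction s using Finset.induction_on with
  | empty => exact hasPM_empty
  | insert i s hi ih =>
    rw [coe_insert, Set.pairwiseDisjoint_insert_of_notMem (mod_cast hi)] at hd
    rw [biUnion_insert]
    exact (hasPM_of_mem (he i (mem_insert_self i s))).union
      (ih (fun j hj => he j (mem_insert_of_mem hj)) hd.1)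
      ((disjoint_biUnion_right _ _ _).2 hd.2)

variable {ι : Type*} [Fintype ι] {p : ι → Finset α}

theorem hasPM_map_union_biUnion {w : ι ↪ α} (hp : Pairwise (Disjoint on p))
    (hwp : ∀ i j, w i ∉ p j) (hH : ∀ i, insert (w i) (p i) ∈ H) :
    HasPM H (univ.map w ∪ univ.biUnion p) := by
  have hU : univ.map w ∪ univ.biUnion p = univ.biUnion fun i => insert (w i) (p i) := by
    ext a
    simp [exists_or, eq_comm]
  rw [hU]
  refine hasPM_biUnion (fun i _ => hH i) fun i _ j _ hij => ?_
  simp [hwp, Ne.symm hij, hp hij]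

/-- The exchange step: the pieces `p i`, which `w` completes to a perfect matching, are completed
by `v` instead, and the vertices of `w` set free are covered by the edge through `x`. -/
theorem hasPM_map_union_biUnion_union_insert {x : α} {v w : ι ↪ α}
    (hp : Pairwise (Disjoint on p)) (hvp : ∀ i j, v i ∉ p j) (hwp : ∀ i j, w i ∉ p j)
    (hxp : ∀ i, x ∉ p i) (hxv : ∀ i, v i ≠ x) (hvw : ∀ i j, v i ≠ w j)
    (hH : ∀ i, insert (v i) (p i) ∈ H) (hx : insert x (univ.map w) ∈ H) :
    HasPM H (univ.map w ∪ univ.biUnion p ∪ insert x (univ.map v)) := by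
  have hU : univ.map w ∪ univ.biUnion p ∪ insert x (univ.map v) =
      (univ.map v ∪ univ.biUnion p) ∪ insert x (univ.map w) := by
    grind
  rw [hU]
  refine (hasPM_map_union_biUnion hp hvp hH).union (hasPM_of_mem hx) ?_
  simp only [disjoint_left, mem_union, mem_map, mem_univ, true_and, mem_biUnion, mem_insert]
  grind

end PerfectMatching

section SetFamilies

open Finset

variable {V : Type*} [DecidableEq V]

theorem card_memberSubfamily (v : V) (𝒜 : Finset (Finset V)) :
    #(𝒜.memberSubfamily v) = #{S ∈ 𝒜 | v ∈ S} :=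
  card_image_of_injOn ((erase_injOn' v).mono fun _ hS => (mem_filter.1 hS).2)

theorem sized_memberSubfamily {𝒜 : Finset (Finset V)} {s : ℕ}
    (h𝒜 : (𝒜 : Set (Finset V)).Sized s) (v : V) :
    (𝒜.memberSubfamily v : Set (Finset V)).Sized (s - 1) := fun S hS => by
  obtain ⟨hS, hv⟩ := mem_memberSubfamily.1 hS
  rw [← h𝒜 hS, card_insert_of_notMem hv, Nat.add_sub_cancel]

variable [Fintype V]

theorem card_mul_card_powersetCard_filter_mem (s : ℕ) (v : V) :
    Fintype.card V * #{S ∈ powersetCard s (univ : Finset V) | v ∈ S} =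
      s * (Fintype.card V).choose s := by
  obtain _ | s := s
  · simp
  · have hcard := card_filter_powersetCard_subset {v} univ (s + 1) (subset_univ _) (by simp)
    simp only [singleton_subset_iff, card_univ, card_singleton, Nat.add_sub_cancel] at hcard
    have hV : Fintype.card V - 1 + 1 = Fintype.card V :=
      Nat.sub_add_cancel (Fintype.card_pos_iff.2 ⟨v⟩)
    have hchoose := Nat.add_one_mul_choose_eq (Fintype.card V - 1) s
    rw [hV] at hchoose
    rw [hcard, hchoose, mul_comm]

theorem card_powersetCard_filter_not_disjoint_le (s : ℕ) (Z : Finset V) :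
    (#{S ∈ powersetCard s (univ : Finset V) | ¬ Disjoint S Z} : ℝ) ≤
      #Z * (s / Fintype.card V * (Fintype.card V).choose s) := by
  have hsub : {S ∈ powersetCard s (univ : Finset V) | ¬ Disjoint S Z} ⊆
      Z.biUnion fun z => {S ∈ powersetCard s (univ : Finset V) | z ∈ S} := fun S hS => by
    obtain ⟨hS, hSZ⟩ := mem_filter.1 hS
    obtain ⟨z, hzS, hzZ⟩ := not_disjoint_iff.1 hSZ
    exact mem_biUnion.2 ⟨z, hzZ, mem_filter.2 ⟨hS, hzS⟩⟩
  have hmem (z : V) : (#{S ∈ powersetCard s (univ : Finset V) | z ∈ S} : ℝ) =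
      s / Fintype.card V * (Fintype.card V).choose s := by
    have hV : (Fintype.card V : ℝ) ≠ 0 := Nat.cast_ne_zero.2 (Fintype.card_pos_iff.2 ⟨z⟩).ne'
    rw [div_mul_eq_mul_div, eq_div_iff hV, mul_comm]
    exact_mod_cast card_mul_card_powersetCard_filter_mem s z
  calc (#{S ∈ powersetCard s (univ : Finset V) | ¬ Disjoint S Z} : ℝ)
      ≤ ∑ z ∈ Z, (#{S ∈ powersetCard s (univ : Finset V) | z ∈ S} : ℝ) :=
        mod_cast (card_le_card hsub).trans card_biUnion_le
    _ = #Z * (s / Fintype.card V * (Fintype.card V).choose s) := by simp [hmem]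

variable {s : ℕ} {𝒜 ℬ : Finset (Finset V)}

theorem card_sub_le_card_filter_disjoint (h𝒜 : (𝒜 : Set (Finset V)).Sized s) (Z : Finset V) :
    #𝒜 - #Z * (s / Fintype.card V * (Fintype.card V).choose s) ≤
      (#{S ∈ 𝒜 | Disjoint S Z} : ℝ) := by
  have hsplit : (#{S ∈ 𝒜 | Disjoint S Z} : ℝ) + #{S ∈ 𝒜 | ¬ Disjoint S Z} = #𝒜 :=
    mod_cast card_filter_add_card_filter_not _
  have hmono : (#{S ∈ 𝒜 | ¬ Disjoint S Z} : ℝ) ≤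
      #{S ∈ powersetCard s (univ : Finset V) | ¬ Disjoint S Z} :=
    mod_cast card_le_card (filter_subset_filter _ (subset_powersetCard_univ_iff.2 h𝒜))
  linarith [card_powersetCard_filter_not_disjoint_le s Z]

theorem card_add_card_le_choose_add_card_inter (h𝒜 : (𝒜 : Set (Finset V)).Sized s)
    (hℬ : (ℬ : Set (Finset V)).Sized s) :
    #𝒜 + #ℬ ≤ (Fintype.card V).choose s + #(𝒜 ∩ ℬ) := by
  have hunion : ((𝒜 ∪ ℬ : Finset _) : Set (Finset V)).Sized s := by
    rw [coe_union]
    exact Set.sized_union.2 ⟨h𝒜, hℬ⟩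
  rw [← card_union_add_card_inter]
  exact Nat.add_le_add_right hunion.card_le _

theorem cast_choose_pred {n : ℕ} (hn : 1 ≤ n) (s : ℕ) :
    ((n - 1).choose s : ℝ) = (1 - s / n) * n.choose s := by
  obtain ⟨m, rfl⟩ := Nat.exists_eq_add_of_le' hn
  rw [Nat.add_sub_cancel]
  obtain hs | hs := le_or_gt s (m + 1)
  · have h := congrArg (Nat.cast : ℕ → ℝ) (Nat.choose_mul_succ_eq m s)
    push_cast [hs] at h ⊢
    field_simp
    linarith
  · simp [Nat.choose_eq_zero_of_lt hs, Nat.choose_eq_zero_of_lt (m.lt_succ_self.trans hs)]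

theorem mul_choose_le_mul_choose_pred (n s : ℕ) : s * n.choose s ≤ n * n.choose (s - 1) := by
  obtain _ | s := s
  · simp
  · rw [Nat.add_sub_cancel, mul_comm, Nat.choose_succ_right_eq, mul_comm]
    exact Nat.mul_le_mul_right _ (Nat.sub_le n s)

theorem le_card_inter_filter_disjoint (hV : 1 ≤ Fintype.card V) {b : ℝ}
    (h𝒜 : (𝒜 : Set (Finset V)).Sized s) (hℬ : (ℬ : Set (Finset V)).Sized s)
    (h𝒜c : (1 / 2 + b) * (Fintype.card V - 1).choose s ≤ (#𝒜 : ℝ))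
    (hℬc : (1 / 2 + b) * (Fintype.card V - 1).choose s ≤ (#ℬ : ℝ)) (Z : Finset V) :
    (2 * b - (1 + 2 * b + #Z) * (s / Fintype.card V)) * (Fintype.card V).choose s ≤
      (#{S ∈ 𝒜 ∩ ℬ | Disjoint S Z} : ℝ) := by
  have hinter : (#𝒜 + #ℬ : ℝ) ≤ (Fintype.card V).choose s + #(𝒜 ∩ ℬ) :=
    mod_cast card_add_card_le_choose_add_card_inter h𝒜 hℬ
  have havoid := card_sub_le_card_filter_disjoint
    (h𝒜.mono (coe_subset.2 (inter_subset_left (s₂ := ℬ)))) Z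
  rw [cast_choose_pred hV] at h𝒜c hℬc
  linarith

theorem mul_choose_le_card_of_le_card_filter_mem (hs : 1 ≤ s) (hV : 1 ≤ Fintype.card V)
    (h𝒜 : (𝒜 : Set (Finset V)).Sized s) {c : ℝ}
    (hdeg : ∀ v, c * (Fintype.card V - 1).choose (s - 1) ≤ (#{S ∈ 𝒜 | v ∈ S} : ℝ)) :
    c * (Fintype.card V).choose s ≤ (#𝒜 : ℝ) := by
  set n := Fintype.card V
  have hcount : n * ⌈c * (n - 1).choose (s - 1)⌉₊ ≤ #𝒜 * s :=
    (le_sum_card fun v => Nat.ceil_le.2 (hdeg v)).trans_eq (sum_const_nat fun S hS => h𝒜 hS)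
  have hchoose : n * (n - 1).choose (s - 1) = n.choose s * s := by
    have h := Nat.add_one_mul_choose_eq (n - 1) (s - 1)
    rwa [Nat.sub_add_cancel hV, Nat.sub_add_cancel hs] at h
  refine le_of_mul_le_mul_right (a := (s : ℝ)) ?_ (by exact_mod_cast hs)
  calc c * n.choose s * s = n * (c * (n - 1).choose (s - 1)) := by
        rw [mul_assoc, ← Nat.cast_mul, ← hchoose, Nat.cast_mul, mul_left_comm]
    _ ≤ n * ⌈c * (n - 1).choose (s - 1)⌉₊ := by gcongr; exact Nat.le_ceil _
    _ ≤ #𝒜 * s := mod_cast hcount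

end SetFamilies

section DisjointTuples

open Finset Function

variable {α : Type*} {j : ℕ}

theorem pairwise_disjoint_fin_cons {q : Finset α} {p : Fin j → Finset α} :
    Pairwise (Disjoint on (Fin.cons q p : Fin (j + 1) → Finset α)) ↔
      (∀ i, Disjoint q (p i)) ∧ Pairwise (Disjoint on p) := by
  have : Std.Symm (Disjoint on (Fin.cons q p : Fin (j + 1) → Finset α)) :=
    ⟨fun _ _ h => h.symm⟩
  rw [pairwise_fin_succ_iff_of_isSymm]
  simp [Pairwise, onFun]

open scoped Classical in
/-- The tuples of pairwise disjoint subsets of `U` with prescribed cardinalities. -/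
noncomputable def disjointTuples (s : Fin j → ℕ) (U : Finset α) : Finset (Fin j → Finset α) :=
  {p ∈ Fintype.piFinset fun i => powersetCard (s i) U | Pairwise (Disjoint on p)}

theorem mem_disjointTuples {s : Fin j → ℕ} {U : Finset α} {p : Fin j → Finset α} :
    p ∈ disjointTuples s U ↔ (∀ i, p i ⊆ U ∧ #(p i) = s i) ∧ Pairwise (Disjoint on p) := by
  simp only [disjointTuples, mem_filter, Fintype.mem_piFinset, mem_powersetCard]

theorem card_disjointTuples_succ_le [DecidableEq α] (s : Fin (j + 1) → ℕ) (U : Finset α) :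
    #(disjointTuples s U) ≤
      ∑ q ∈ powersetCard (s 0) U, #(disjointTuples (fun i => s i.succ) (U \ q)) := by
  rw [← card_sigma]
  refine card_le_card_of_injOn (fun p => ⟨p 0, Fin.tail p⟩) ?_ ?_
  · intro p h
    induction p using Fin.consCases with | _ q p
    simp only [mem_coe, mem_disjointTuples, Fin.forall_fin_succ, Fin.cons_zero, Fin.cons_succ,
      pairwise_disjoint_fin_cons] at h
    simp only [coe_sigma, Set.mem_sigma_iff, mem_coe, mem_powersetCard, Fin.cons_zero,
      Fin.tail_cons, mem_disjointTuples, subset_sdiff]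
    exact ⟨h.1.1, fun i => ⟨⟨(h.1.2 i).1, (h.2.1 i).symm⟩, (h.1.2 i).2⟩, h.2.2⟩
  · intro p _ p' _ h
    obtain ⟨h0, htail⟩ := Sigma.mk.inj h
    rw [← Fin.cons_self_tail p, h0, eq_of_heq htail, Fin.cons_self_tail]

theorem card_disjointTuples_mul_factorial_le (s : Fin j → ℕ) (U : Finset α) :
    #(disjointTuples s U) * ((∏ i, (s i).factorial) * (#U - ∑ i, s i).factorial) ≤
      (#U).factorial := by
  classical
  induction j generalizing U with
  | zero => simp [disjointTuples, Subsingleton.pairwise]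
  | succ j ih =>
    set T : Finset α → Finset (Fin j → Finset α) := disjointTuples fun i => s i.succ
    set D := (∏ i : Fin j, (s i.succ).factorial) * (#U - ∑ i, s i).factorial
    have hrest : ∀ q ∈ powersetCard (s 0) U, #(T (U \ q)) * D ≤ (#U - s 0).factorial := by
      intro q hq
      obtain ⟨hqU, hqs⟩ := mem_powersetCard.1 hq
      have h := ih (fun i => s i.succ) (U \ q)
      rwa [card_sdiff_of_subset hqU, hqs, Nat.sub_sub, ← Fin.sum_univ_succ] at h
    calc _ ≤ (∑ q ∈ powersetCard (s 0) U, #(T (U \ q))) * ((s 0).factorial * D) := by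
          rw [Fin.prod_univ_succ, mul_assoc]
          exact Nat.mul_le_mul_right _ (card_disjointTuples_succ_le s U)
      _ = (∑ q ∈ powersetCard (s 0) U, #(T (U \ q)) * D) * (s 0).factorial := by
          rw [← sum_mul]; ring
      _ ≤ (∑ _ ∈ powersetCard (s 0) U, (#U - s 0).factorial) * (s 0).factorial :=
          Nat.mul_le_mul_right _ (sum_le_sum hrest)
      _ = (#U).choose (s 0) * (s 0).factorial * (#U - s 0).factorial := by
          rw [sum_const, card_powersetCard, smul_eq_mul]; ring
      _ ≤ (#U).factorial := by
          obtain hs | hs := le_or_gt (s 0) #U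
          · exact (Nat.choose_mul_factorial_mul_factorial hs).le
          · simp [Nat.choose_eq_zero_of_lt hs]

theorem card_disjointTuples_pred_mul_factorial_le {k : ℕ} {U : Finset α} (hU : #U = k ^ 2) :
    #(disjointTuples (fun _ : Fin k => k - 1) U) * k.factorial ≤ (k ^ 2).factorial := by
  have h := card_disjointTuples_mul_factorial_le (fun _ : Fin k => k - 1) U
  have hrest : k ^ 2 - k * (k - 1) = k := by
    cases k <;> simp [pow_two, ← Nat.mul_sub]
  simp only [prod_const, sum_const, card_fin, hU, smul_eq_mul, hrest] at h
  refine le_trans (Nat.mul_le_mul_left _ ?_) h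
  exact Nat.le_mul_of_pos_left _ (pow_pos (Nat.factorial_pos _) _)

open scoped Classical in
theorem sum_card_filter_disjoint_biUnion_le (𝒢 : Fin (j + 1) → Finset (Finset α)) :
    ∑ p ∈ Fintype.piFinset (fun i => 𝒢 (Fin.succ i)) with Pairwise (Disjoint on p),
        #{q ∈ 𝒢 0 | Disjoint q (univ.biUnion p)} ≤
      #{p ∈ Fintype.piFinset 𝒢 | Pairwise (Disjoint on p)} := by
  rw [← card_sigma]
  refine card_le_card_of_injOn (fun a => Fin.cons a.2 a.1) ?_ ?_
  · rintro ⟨p, q⟩ h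
    simp only [coe_sigma, Set.mem_sigma_iff, mem_coe, mem_filter, Fintype.mem_piFinset,
      disjoint_biUnion_right, mem_univ, true_imp_iff] at h
    simp only [mem_coe, mem_filter, Fintype.mem_piFinset, pairwise_disjoint_fin_cons,
      Fin.forall_fin_succ, Fin.cons_zero, Fin.cons_succ]
    exact ⟨⟨h.2.1, h.1.1⟩, h.2.2, h.1.2⟩
  · rintro ⟨p, q⟩ _ ⟨p', q'⟩ _ h
    obtain ⟨rfl, rfl⟩ := Fin.cons_injective2 h
    rfl

open scoped Classical in
theorem pow_le_card_pairwise_disjoint_tuples {t : ℕ} {c : ℝ} (hc : 0 ≤ c)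
    (𝒢 : Fin j → Finset (Finset α)) (ht : ∀ i, ∀ q ∈ 𝒢 i, #q ≤ t)
    (h : ∀ i (Z : Finset α), #Z ≤ j * t → c ≤ (#{q ∈ 𝒢 i | Disjoint q Z} : ℝ)) :
    c ^ j ≤ (#{p ∈ Fintype.piFinset 𝒢 | Pairwise (Disjoint on p)} : ℝ) := by
  induction j with
  | zero => simp [Subsingleton.pairwise]
  | succ j ih =>
    set T := {p ∈ Fintype.piFinset fun i => 𝒢 (Fin.succ i) | Pairwise (Disjoint on p)}
    have hT : c ^ j ≤ (#T : ℝ) := ih _ (fun i => ht i.succ) fun i Z hZ =>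
      h i.succ Z (hZ.trans (Nat.mul_le_mul_right t j.le_succ))
    have hext : ∀ p ∈ T, c ≤ (#{q ∈ 𝒢 0 | Disjoint q (univ.biUnion p)} : ℝ) := fun p hp =>
      h 0 _ <| by
        have hcard : #(univ.biUnion p) ≤ #(univ : Finset (Fin j)) * t :=
          card_biUnion_le_card_mul _ _ _ fun i _ =>
            ht i.succ _ (Fintype.mem_piFinset.1 (mem_filter.1 hp).1 i)
        rw [card_fin] at hcard
        exact hcard.trans (Nat.mul_le_mul_right t j.le_succ)
    calc c ^ (j + 1) = c ^ j * c := pow_succ c j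
      _ ≤ #T * c := by gcongr
      _ = ∑ _ ∈ T, c := by rw [sum_const, nsmul_eq_mul]
      _ ≤ ∑ p ∈ T, (#{q ∈ 𝒢 0 | Disjoint q (univ.biUnion p)} : ℝ) := sum_le_sum hext
      _ ≤ _ := mod_cast sum_card_filter_disjoint_biUnion_le 𝒢

end DisjointTuples

section PartiteHypergraph

open Finset Function

variable {X V : Type*}

theorem card_filter_isLeft (Q : Finset (X ⊕ V)) : #{v ∈ Q | v.isLeft = true} = #Q.toLeft := by
  rw [← card_map (Embedding.inl : X ↪ X ⊕ V)]
  congr 1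
  ext (x | v) <;> simp

theorem card_filter_isRight (Q : Finset (X ⊕ V)) : #{v ∈ Q | v.isRight = true} = #Q.toRight := by
  rw [← card_map (Embedding.inr : V ↪ X ⊕ V)]
  congr 1
  ext (x | v) <;> simp

/-- The set `{x} ∪ S` of vertices of a bipartitioned vertex set `X ⊕ V`; the edges of a
`(1, k)`-partite hypergraph are of this form. -/
def partiteEdge (x : X) (S : Finset V) : Finset (X ⊕ V) :=
  ({x} : Finset X).disjSum S

variable {x y : X} {v : V} {S T : Finset V}

@[simp]
theorem toLeft_partiteEdge : (partiteEdge x S).toLeft = {x} :=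
  toLeft_disjSum

@[simp]
theorem toRight_partiteEdge : (partiteEdge x S).toRight = S :=
  toRight_disjSum

@[simp]
theorem inl_mem_partiteEdge : Sum.inl y ∈ partiteEdge x S ↔ y = x := by
  rw [partiteEdge, inl_mem_disjSum, mem_singleton]

@[simp]
theorem inr_mem_partiteEdge : Sum.inr v ∈ partiteEdge x S ↔ v ∈ S :=
  inr_mem_disjSum

theorem partiteEdge_injective2 : Injective2 (partiteEdge : X → Finset V → _) :=
  fun _ _ _ _ h => (Injective2_disjSum h).imp singleton_injective.eq_iff.1 id

theorem partiteEdge_toRight {e : Finset (X ⊕ V)} (he : e.toLeft = {x}) :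
    partiteEdge x e.toRight = e := by
  rw [partiteEdge, ← he, toLeft_disjSum_toRight]

theorem disjoint_partiteEdge {Z : Finset (X ⊕ V)} (hx : x ∉ Z.toLeft)
    (hS : Disjoint S Z.toRight) : Disjoint (partiteEdge x S) Z := by
  rw [disjoint_left] at hS ⊢
  rintro (y | w) <;> simp_all

/-- A `(1, k)`-partite hypergraph with vertex classes `X` and `V`. -/
def IsPartite (k : ℕ) (H : Finset (Finset (X ⊕ V))) : Prop :=
  ∀ e ∈ H, #e.toLeft = 1 ∧ #e.toRight = k

variable [DecidableEq X] [DecidableEq V] {k : ℕ} {H : Finset (Finset (X ⊕ V))}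

theorem insert_inr_partiteEdge :
    insert (Sum.inr v) (partiteEdge x S) = partiteEdge x (insert v S) := by
  ext (y | w) <;> simp

theorem partiteEdge_eq_insert_inl :
    partiteEdge x S = insert (Sum.inl x) (S.image Sum.inr) := by
  ext (y | w) <;> simp

theorem isPartite_iff : IsPartite k H ↔
    ∀ e ∈ H, ∃ (x : X) (S : Finset V), #S = k ∧ e = insert (Sum.inl x) (S.image Sum.inr) := by
  refine forall₂_congr fun e _ => ⟨fun ⟨he, hk⟩ => ?_, ?_⟩
  · obtain ⟨x, hx⟩ := card_eq_one.1 he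
    exact ⟨x, e.toRight, hk, by rw [← partiteEdge_eq_insert_inl, partiteEdge_toRight hx]⟩
  · rintro ⟨x, S, hS, rfl⟩
    rw [← partiteEdge_eq_insert_inl, toLeft_partiteEdge, toRight_partiteEdge]
    exact ⟨card_singleton x, hS⟩

/-- The sets that form an edge of `H` with either of the vertices `u` and `v`. -/
def exchangers (H : Finset (Finset (X ⊕ V))) (u v : X ⊕ V) : Finset (Finset (X ⊕ V)) :=
  H.memberSubfamily u ∩ H.memberSubfamily v

theorem mem_exchangers {u v : X ⊕ V} {q : Finset (X ⊕ V)} : q ∈ exchangers H u v ↔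
    (insert u q ∈ H ∧ u ∉ q) ∧ insert v q ∈ H ∧ v ∉ q := by
  rw [exchangers, mem_inter, mem_memberSubfamily, mem_memberSubfamily]

theorem IsPartite.card_toLeft_of_mem_exchangers (hH : IsPartite k H) {u : X ⊕ V}
    {q : Finset (X ⊕ V)} (hq : q ∈ exchangers H (Sum.inr v) u) : #q.toLeft = 1 := by
  simpa using (hH _ (mem_exchangers.1 hq).1.1).1

theorem IsPartite.card_toRight_of_mem_exchangers (hH : IsPartite k H) {u : X ⊕ V}
    {q : Finset (X ⊕ V)} (hq : q ∈ exchangers H (Sum.inr v) u) : #q.toRight = k - 1 := by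
  obtain ⟨⟨hqH, hvq⟩, -⟩ := mem_exchangers.1 hq
  rw [← (hH _ hqH).2, toRight_insert_inr, card_insert_of_notMem (by simpa using hvq),
    Nat.add_sub_cancel]

variable [Fintype V]

/-- The link `N_H(x)` of a vertex `x` of the first class: the sets which form an edge of `H`
with `x`. -/
def link (H : Finset (Finset (X ⊕ V))) (x : X) : Finset (Finset V) :=
  {S | partiteEdge x S ∈ H}

theorem mem_link : S ∈ link H x ↔ partiteEdge x S ∈ H := by
  rw [link, mem_filter_univ]

theorem IsPartite.sized_link (hH : IsPartite k H) (x : X) :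
    (link H x : Set (Finset V)).Sized k := fun S hS => by
  simpa using (hH _ (mem_link.1 hS)).2

theorem IsPartite.card_filter_mem_link (hH : IsPartite k H) (x : X) (v : V) :
    #{S ∈ link H x | v ∈ S} = #{e ∈ H | Sum.inl x ∈ e ∧ Sum.inr v ∈ e} := by
  refine card_nbij' (partiteEdge x) toRight (fun S hS => ?_) (fun e he => ?_)
    (fun S _ => toRight_partiteEdge) fun e he => ?_
  all_goals simp only [mem_coe, mem_filter, mem_link] at *
  · simpa using hS
  all_goals
    obtain ⟨y, hy⟩ := card_eq_one.1 (hH e he.1).1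
    obtain rfl : x = y := by simpa [hy] using mem_toLeft.2 he.2.1
    have hxe := partiteEdge_toRight hy
  · exact ⟨hxe.symm ▸ he.1, mem_toRight.2 he.2.2⟩
  · exact hxe

theorem partiteEdge_mem_exchangers {w : V}
    (hS : S ∈ (link H x).memberSubfamily v ∩ (link H x).memberSubfamily w) :
    partiteEdge x S ∈ exchangers H (Sum.inr v) (Sum.inr w) := by
  simpa [mem_exchangers, mem_link, insert_inr_partiteEdge] using hS

theorem sum_card_link_inter_le_card_exchangers_filter_disjoint [Fintype X] (v w : V)
    (Z : Finset (X ⊕ V)) :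
    ∑ x ∈ univ \ Z.toLeft,
        #{S ∈ (link H x).memberSubfamily v ∩ (link H x).memberSubfamily w | Disjoint S Z.toRight} ≤
      #{q ∈ exchangers H (Sum.inr v) (Sum.inr w) | Disjoint q Z} := by
  rw [← card_sigma]
  refine card_le_card_of_injOn (fun a => partiteEdge a.1 a.2) ?_ ?_
  · rintro ⟨x, S⟩ h
    simp only [coe_sigma, Set.mem_sigma_iff, mem_coe, mem_sdiff, mem_univ, true_and,
      mem_filter] at h
    exact mem_filter.2 ⟨partiteEdge_mem_exchangers h.2.1, disjoint_partiteEdge h.1 h.2.2⟩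
  · rintro ⟨x, S⟩ _ ⟨y, T⟩ _ h
    obtain ⟨rfl, rfl⟩ := partiteEdge_injective2 h
    rfl

variable {b : ℝ} {m : ℕ}

theorem IsPartite.mul_choose_pred_le_card_link_inter_filter_disjoint
    (hH : IsPartite k H) (hb : 0 < b) {x : X}
    (hd : ∀ v, (1 / 2 + b) * (Fintype.card V - 1).choose (k - 1) ≤
      (#{S ∈ link H x | v ∈ S} : ℝ))
    (hV : 2 * k * (1 + 2 * b + m) ≤ b * Fintype.card V) (v w : V) {Z : Finset V} (hZ : #Z ≤ m) :
    3 / 2 * b * (Fintype.card V).choose (k - 1) ≤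
      (#{S ∈ (link H x).memberSubfamily v ∩ (link H x).memberSubfamily w | Disjoint S Z} : ℝ) := by
  set n := Fintype.card V
  have hn : 1 ≤ n := Fintype.card_pos_iff.2 ⟨v⟩
  have hdeg (u : V) : (1 / 2 + b) * (n - 1).choose (k - 1) ≤
      (#((link H x).memberSubfamily u) : ℝ) := by
    rw [card_memberSubfamily]
    exact hd u
  have hsized (u : V) := sized_memberSubfamily (hH.sized_link x) u
  refine le_trans ?_
    (le_card_inter_filter_disjoint hn (hsized v) (hsized w) (hdeg v) (hdeg w) Z)
  have hloss : (1 + 2 * b + #Z) * ((k - 1 : ℕ) / n : ℝ) ≤ b / 2 := by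
    rw [← mul_div_assoc, div_le_iff₀ (mod_cast hn)]
    calc (1 + 2 * b + #Z) * ((k - 1 : ℕ) : ℝ) ≤ (1 + 2 * b + m) * k := by
          gcongr
          exact Nat.sub_le k 1
      _ ≤ b / 2 * n := by linarith
  gcongr
  linarith

theorem IsPartite.mul_choose_le_card_exchangers_filter_disjoint [Fintype X]
    (hH : IsPartite k H) (hk : 1 ≤ k) (hb : 0 < b)
    (hd : ∀ x v, (1 / 2 + b) * (Fintype.card V - 1).choose (k - 1) ≤
      (#{S ∈ link H x | v ∈ S} : ℝ))
    (hV : 2 * k * (1 + 2 * b + m) ≤ b * Fintype.card V)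
    (hX : 2 * (Fintype.card V : ℝ) ≤ 3 * k * (Fintype.card X - m))
    (v w : V) {Z : Finset (X ⊕ V)} (hZ : #Z ≤ m) :
    b * (Fintype.card V).choose k ≤
      (#{q ∈ exchangers H (Sum.inr v) (Sum.inr w) | Disjoint q Z} : ℝ) := by
  set n := Fintype.card V
  have hk' : (0 : ℝ) < k := mod_cast hk
  have hchoose : (k * n.choose k : ℝ) ≤ n * n.choose (k - 1) := mod_cast
    mul_choose_le_mul_choose_pred n k
  have hleft : (Fintype.card X : ℝ) - m ≤ #(univ \ Z.toLeft) := by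
    have h := le_card_sdiff Z.toLeft univ
    rw [card_univ, tsub_le_iff_right] at h
    rw [sub_le_iff_le_add]
    exact_mod_cast h.trans (Nat.add_le_add_left (card_toLeft_le.trans hZ) _)
  refine le_of_mul_le_mul_left (a := (k : ℝ)) ?_ hk'
  calc k * (b * n.choose k) = b * (k * n.choose k) := by ring
    _ ≤ b * (n * n.choose (k - 1)) := by gcongr
    _ ≤ b * (3 / 2 * k * (Fintype.card X - m) * n.choose (k - 1)) := by gcongr; linarith
    _ = k * ((Fintype.card X - m) * (3 / 2 * b * n.choose (k - 1))) := by ring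
    _ ≤ k * (#(univ \ Z.toLeft) * (3 / 2 * b * n.choose (k - 1))) := by gcongr
    _ = k * ∑ x ∈ univ \ Z.toLeft, (3 / 2 * b * n.choose (k - 1)) := by
        rw [sum_const, nsmul_eq_mul]
    _ ≤ _ := by
        gcongr
        refine (sum_le_sum fun x _ => hH.mul_choose_pred_le_card_link_inter_filter_disjoint hb
          (hd x) hV v w (card_toRight_le.trans hZ)).trans ?_
        exact_mod_cast sum_card_link_inter_le_card_exchangers_filter_disjoint v w Z

end PartiteHypergraph

section Frames

open Finset Function

variable {X V : Type*} {k : ℕ}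

/-- The raw material of an absorbing set: a `k`-subset `W` of the second vertex class and `k` pieces
with one vertex in the first and `k - 1` vertices in the second class, all pairwise disjoint. -/
structure IsFrame (k : ℕ) (W : Finset V) (p : Fin k → Finset (X ⊕ V)) : Prop where
  card_core : #W = k
  card_toLeft : ∀ i, #(p i).toLeft = 1
  card_toRight : ∀ i, #(p i).toRight = k - 1
  disjoint_core : ∀ i, Disjoint W (p i).toRight
  pairwise_disjoint : Pairwise (Disjoint on p)

variable {W : Finset V} {p : Fin k → Finset (X ⊕ V)}

theorem IsFrame.pairwise_disjoint_toLeft (h : IsFrame k W p) :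
    Pairwise (Disjoint on fun i => (p i).toLeft) := fun i j hij => by
  have hd := h.pairwise_disjoint hij
  simp only [onFun, disjoint_left, mem_toLeft] at hd ⊢
  exact fun _ hx => hd hx

theorem IsFrame.pairwise_disjoint_toRight (h : IsFrame k W p) :
    Pairwise (Disjoint on fun i => (p i).toRight) := fun i j hij => by
  have hd := h.pairwise_disjoint hij
  simp only [onFun, disjoint_left, mem_toRight] at hd ⊢
  exact fun _ hv => hd hv

variable [DecidableEq V]

theorem IsFrame.disjoint_biUnion_toRight (h : IsFrame k W p) :
    Disjoint W (univ.biUnion fun i => (p i).toRight) :=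
  (disjoint_biUnion_right _ _ _).2 fun i _ => h.disjoint_core i

variable [DecidableEq X]

/-- The union of the parts of a frame. -/
def assemble (W : Finset V) (p : Fin k → Finset (X ⊕ V)) : Finset (X ⊕ V) :=
  W.map Embedding.inr ∪ univ.biUnion p

theorem toLeft_assemble : (assemble W p).toLeft = univ.biUnion fun i => (p i).toLeft := by
  ext
  simp [assemble]

theorem toRight_assemble : (assemble W p).toRight = W ∪ univ.biUnion fun i => (p i).toRight := by
  ext
  simp [assemble]

theorem IsFrame.card_toLeft_assemble (h : IsFrame k W p) : #(assemble W p).toLeft = k := by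
  rw [toLeft_assemble, card_biUnion fun i _ j _ hij => h.pairwise_disjoint_toLeft hij]
  simp [h.card_toLeft]

theorem IsFrame.card_toRight_assemble (h : IsFrame k W p) : #(assemble W p).toRight = k ^ 2 := by
  rw [toRight_assemble, card_union_of_disjoint h.disjoint_biUnion_toRight,
    card_biUnion fun i _ j _ hij => h.pairwise_disjoint_toRight hij]
  simp only [h.card_core, h.card_toRight, sum_const, card_fin, smul_eq_mul]
  cases k <;> simp; ring

theorem IsFrame.eq_of_assemble_eq {W' : Finset V} {p' : Fin k → Finset (X ⊕ V)}
    (h : IsFrame k W p) (h' : IsFrame k W' p') (hW : assemble W p = assemble W' p')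
    (hl : ∀ i, (p i).toLeft = (p' i).toLeft) (hr : ∀ i, (p i).toRight = (p' i).toRight) :
    W = W' ∧ p = p' := by
  have hcore {W : Finset V} {p : Fin k → Finset (X ⊕ V)} (h : IsFrame k W p) :
      W = (assemble W p).toRight \ univ.biUnion fun i => (p i).toRight := by
    rw [toRight_assemble, union_sdiff_cancel_right h.disjoint_biUnion_toRight]
  refine ⟨by rw [hcore h, hcore h', hW]; simp only [hr], funext fun i => ?_⟩
  rw [← toLeft_disjSum_toRight (u := p i), hl, hr, toLeft_disjSum_toRight]

theorem IsFrame.toLeft_mem_disjointTuples (h : IsFrame k W p) :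
    (fun i => (p i).toLeft) ∈ disjointTuples (fun _ => 1) (assemble W p).toLeft := by
  refine mem_disjointTuples.2 ⟨fun i => ⟨?_, h.card_toLeft i⟩, h.pairwise_disjoint_toLeft⟩
  rw [toLeft_assemble]
  exact subset_biUnion_of_mem (fun i => (p i).toLeft) (mem_univ i)

theorem IsFrame.toRight_mem_disjointTuples (h : IsFrame k W p) :
    (fun i => (p i).toRight) ∈ disjointTuples (fun _ => k - 1) (assemble W p).toRight := by
  refine mem_disjointTuples.2 ⟨fun i => ⟨?_, h.card_toRight i⟩, h.pairwise_disjoint_toRight⟩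
  rw [toRight_assemble]
  exact (subset_biUnion_of_mem (fun i => (p i).toRight) (mem_univ i)).trans subset_union_right

theorem card_le_factorial_of_isFrame {Q : Finset (X ⊕ V)}
    {𝒜 : Finset ((_ : Finset V) × (Fin k → Finset (X ⊕ V)))}
    (h𝒜 : ∀ a ∈ 𝒜, IsFrame k a.1 a.2 ∧ assemble a.1 a.2 = Q) : #𝒜 ≤ (k ^ 2).factorial := by
  obtain rfl | ⟨a, ha⟩ := 𝒜.eq_empty_or_nonempty
  · simp
  obtain ⟨hQl, hQr⟩ : #Q.toLeft = k ∧ #Q.toRight = k ^ 2 := by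
    obtain ⟨hF, rfl⟩ := h𝒜 a ha
    exact ⟨hF.card_toLeft_assemble, hF.card_toRight_assemble⟩
  set ℒ := disjointTuples (fun _ : Fin k => 1) Q.toLeft
  set ℛ := disjointTuples (fun _ : Fin k => k - 1) Q.toRight
  have hℒ : #ℒ ≤ k.factorial := by
    simpa [hQl] using card_disjointTuples_mul_factorial_le (fun _ : Fin k => 1) Q.toLeft
  have hℛ : #ℛ * k.factorial ≤ (k ^ 2).factorial :=
    card_disjointTuples_pred_mul_factorial_le hQr
  have hinj : #𝒜 ≤ #(ℒ ×ˢ ℛ) := by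
    refine card_le_card_of_injOn
      (fun a => (fun i => (a.2 i).toLeft, fun i => (a.2 i).toRight)) ?_ ?_
    · intro a ha
      obtain ⟨hF, rfl⟩ := h𝒜 a ha
      exact mem_product.2 ⟨hF.toLeft_mem_disjointTuples, hF.toRight_mem_disjointTuples⟩
    · intro a ha a' ha' h
      obtain ⟨hF, hQ⟩ := h𝒜 a ha
      obtain ⟨hF', hQ'⟩ := h𝒜 a' ha'
      obtain ⟨hl, hr⟩ := Prod.mk.inj h
      obtain ⟨hW, hp⟩ := hF.eq_of_assemble_eq hF' (hQ.trans hQ'.symm) (congrFun hl) (congrFun hr)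
      exact Sigma.ext hW (heq_of_eq hp)
  calc #𝒜 ≤ #ℒ * #ℛ := hinj.trans_eq (card_product _ _)
    _ ≤ #ℛ * k.factorial := by rw [mul_comm]; exact Nat.mul_le_mul_left _ hℒ
    _ ≤ (k ^ 2).factorial := hℛ

end Frames

section AbsorbingSets

open Finset Function

variable {X V : Type*} [DecidableEq X] [DecidableEq V] {k : ℕ} {H : Finset (Finset (X ⊕ V))}

/-- The `R`-absorbing sets: balanced `k * (k + 1)`-sets `Q` such that both `Q` and `Q ∪ R` induce
subhypergraphs of `H` with a perfect matching. -/
def absorbingSets (k : ℕ) (H : Finset (Finset (X ⊕ V))) (R : Finset (X ⊕ V)) :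
    Set (Finset (X ⊕ V)) :=
  {Q | #Q.toLeft = k ∧ #Q.toRight = k ^ 2 ∧ HasPM H Q ∧ HasPM H (Q ∪ R)}

theorem IsFrame.assemble_mem_absorbingSets {x₀ : X} {v w : Fin k ↪ V}
    {p : Fin k → Finset (X ⊕ V)} (hF : IsFrame k (univ.map w) p)
    (hp : ∀ i, p i ∈ exchangers H (Sum.inr (v i)) (Sum.inr (w i)))
    (hW : partiteEdge x₀ (univ.map w) ∈ H) (hvw : Disjoint (univ.map w) (univ.map v))
    (hpR : ∀ i, Disjoint (p i) (partiteEdge x₀ (univ.map v))) :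
    assemble (univ.map w) p ∈ absorbingSets k H (partiteEdge x₀ (univ.map v)) := by
  have hedge (u : Fin k ↪ V) : partiteEdge x₀ (univ.map u) =
      insert (Sum.inl x₀) (univ.map (u.trans Embedding.inr)) := by
    ext (y | z) <;> simp
  have hwp (i j) : Sum.inr (w i) ∉ p j := fun h =>
    disjoint_left.1 (hF.disjoint_core j) (mem_map_of_mem w (mem_univ i)) (mem_toRight.2 h)
  have hvp (i j) : Sum.inr (v i) ∉ p j := fun h =>
    disjoint_left.1 (hpR j) h (by simp)
  have hxp (i) : Sum.inl x₀ ∉ p i := fun h => disjoint_left.1 (hpR i) h (by simp)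
  refine ⟨hF.card_toLeft_assemble, hF.card_toRight_assemble, ?_, ?_⟩
  · rw [assemble, map_map]
    exact hasPM_map_union_biUnion hF.pairwise_disjoint hwp fun i => (mem_exchangers.1 (hp i)).2.1
  · rw [assemble, map_map, hedge]
    refine hasPM_map_union_biUnion_union_insert hF.pairwise_disjoint hvp hwp hxp (by simp)
      (fun i j h => ?_) (fun i => (mem_exchangers.1 (hp i)).1.1) (hedge w ▸ hW)
    exact disjoint_left.1 hvw (mem_map_of_mem w (mem_univ j))
      (Sum.inr_injective h ▸ mem_map_of_mem v (mem_univ i))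

theorem card_le_factorial_mul_ncard_absorbingSets [Finite X] [Finite V]
    {R : Finset (X ⊕ V)}
    {𝒜 : Finset ((_ : Finset V) × (Fin k → Finset (X ⊕ V)))}
    (h𝒜 : ∀ a ∈ 𝒜, IsFrame k a.1 a.2 ∧ assemble a.1 a.2 ∈ absorbingSets k H R) :
    #𝒜 ≤ (k ^ 2).factorial * (absorbingSets k H R).ncard := by
  classical
  have := Fintype.ofFinite X
  have := Fintype.ofFinite V
  rw [Set.ncard_eq_toFinset_card']
  refine card_le_mul_card_image_of_maps_to (f := fun a => assemble a.1 a.2)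
    (fun a ha => Set.mem_toFinset.2 (h𝒜 a ha).2) _
    fun Q _ => card_le_factorial_of_isFrame (Q := Q) fun a ha => ?_
  obtain ⟨ha, hQ⟩ := mem_filter.1 ha
  exact ⟨(h𝒜 a ha).1, hQ⟩

variable [Fintype V] {b : ℝ}

theorem IsPartite.half_choose_le_card_link_filter_disjoint (hH : IsPartite k H) (hk : 1 ≤ k)
    {x : X} (hd : ∀ v, (1 / 2 + b) * (Fintype.card V - 1).choose (k - 1) ≤
      (#{S ∈ link H x | v ∈ S} : ℝ))
    (hV : 1 ≤ Fintype.card V) {Z : Finset V} (hZ : (#Z * k : ℝ) ≤ b * Fintype.card V) :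
    1 / 2 * (Fintype.card V).choose k ≤ (#{W ∈ link H x | Disjoint W Z} : ℝ) := by
  have hlink := mul_choose_le_card_of_le_card_filter_mem hk hV (hH.sized_link x) hd
  have havoid := card_sub_le_card_filter_disjoint (hH.sized_link x) Z
  have hloss : #Z * (k / Fintype.card V * (Fintype.card V).choose k) ≤
      b * (Fintype.card V).choose k := by
    rw [← mul_assoc, ← mul_div_assoc]
    gcongr
    rwa [div_le_iff₀ (mod_cast hV)]
  linarith

variable [Fintype X]

theorem IsPartite.exists_frames_of_mem_link (hH : IsPartite k H) (hk : 1 ≤ k) (hb : 0 < b)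
    (hd : ∀ x v, (1 / 2 + b) * (Fintype.card V - 1).choose (k - 1) ≤
      (#{S ∈ link H x | v ∈ S} : ℝ))
    (hV : 2 * k * (1 + 2 * b + ((k + 1) ^ 2 : ℕ)) ≤ b * Fintype.card V)
    (hX : 2 * (Fintype.card V : ℝ) ≤ 3 * k * (Fintype.card X - ((k + 1) ^ 2 : ℕ)))
    {x₀ : X} {V₀ W : Finset V} (hV₀ : #V₀ = k) (hW : W ∈ link H x₀) (hWV : Disjoint W V₀) :
    ∃ T : Finset (Fin k → Finset (X ⊕ V)), (b * (Fintype.card V).choose k) ^ k ≤ (#T : ℝ) ∧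
      ∀ p ∈ T, IsFrame k W p ∧ assemble W p ∈ absorbingSets k H (partiteEdge x₀ V₀) := by
  classical
  have hWk : #W = k := hH.sized_link x₀ hW
  obtain ⟨v, rfl⟩ := Embedding.exists_of_card_eq_finset ((Fintype.card_fin k).trans hV₀.symm)
  obtain ⟨w, rfl⟩ := Embedding.exists_of_card_eq_finset ((Fintype.card_fin k).trans hWk.symm)
  set Z₀ := partiteEdge x₀ (univ.map v) ∪ (univ.map w).map Embedding.inr
  set 𝒢 : Fin k → Finset (Finset (X ⊕ V)) := fun i =>
    {q ∈ exchangers H (Sum.inr (v i)) (Sum.inr (w i)) | Disjoint q Z₀} with h𝒢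
  have hZ₀ : #Z₀ ≤ 2 * k + 1 := by
    refine (card_union_le _ _).trans_eq ?_
    simp only [partiteEdge, card_disjSum, card_singleton, card_map, card_fin]
    ring
  have h𝒢l {i q} (hq : q ∈ 𝒢 i) : #q.toLeft = 1 :=
    hH.card_toLeft_of_mem_exchangers (mem_filter.1 hq).1
  have h𝒢r {i q} (hq : q ∈ 𝒢 i) : #q.toRight = k - 1 :=
    hH.card_toRight_of_mem_exchangers (mem_filter.1 hq).1
  refine ⟨_, pow_le_card_pairwise_disjoint_tuples (t := k) (by positivity) 𝒢 (fun i q hq => ?_)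
    fun i Z hZ => ?_, fun p hp => ?_⟩
  · rw [← card_toLeft_add_card_toRight, h𝒢l hq, h𝒢r hq]
    omega
  · simp only [h𝒢, filter_filter, ← disjoint_union_right]
    refine hH.mul_choose_le_card_exchangers_filter_disjoint hk hb hd hV hX _ _ ?_
    -- `(k + 1) ^ 2` is the number of vertices of `R`, of `W` and of `k` pieces.
    calc #(Z₀ ∪ Z) ≤ #Z₀ + #Z := card_union_le Z₀ Z
      _ ≤ (2 * k + 1) + k * k := Nat.add_le_add hZ₀ hZ
      _ = (k + 1) ^ 2 := by ring
  · obtain ⟨hp𝒢, hpd⟩ := mem_filter.1 hp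
    rw [Fintype.mem_piFinset] at hp𝒢
    have hpZ (i) := disjoint_union_right.1 (mem_filter.1 (hp𝒢 i)).2
    have hF : IsFrame k (univ.map w) p := ⟨hWk, fun i => h𝒢l (hp𝒢 i), fun i => h𝒢r (hp𝒢 i),
      fun i => disjoint_left.2 fun u hu hup => disjoint_left.1 (hpZ i).2 (mem_toRight.1 hup)
        (mem_map_of_mem _ hu), hpd⟩
    exact ⟨hF, hF.assemble_mem_absorbingSets (fun i => (mem_filter.1 (hp𝒢 i)).1)
      (mem_link.1 hW) hWV fun i => (hpZ i).1⟩

theorem IsPartite.le_ncard_absorbingSets (hH : IsPartite k H) (hk : 1 ≤ k) (hb : 0 < b)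
    (hd : ∀ x v, (1 / 2 + b) * (Fintype.card V - 1).choose (k - 1) ≤
      (#{S ∈ link H x | v ∈ S} : ℝ))
    (hV : 2 * k * (1 + 2 * b + ((k + 1) ^ 2 : ℕ)) ≤ b * Fintype.card V)
    (hX : 2 * (Fintype.card V : ℝ) ≤ 3 * k * (Fintype.card X - ((k + 1) ^ 2 : ℕ)))
    {R : Finset (X ⊕ V)} (hRl : #R.toLeft = 1) (hRr : #R.toRight = k) :
    b ^ k * ((Fintype.card V).choose k : ℝ) ^ (k + 1) / (2 * ((k ^ 2).factorial : ℝ)) ≤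
      ((absorbingSets k H R).ncard : ℝ) := by
  obtain ⟨x₀, hx₀⟩ := card_eq_one.1 hRl
  rw [← partiteEdge_toRight hx₀]
  set V₀ := R.toRight
  set N := (Fintype.card V).choose k
  set 𝒲 := {W ∈ link H x₀ | Disjoint W V₀}
  have h𝒲 : 1 / 2 * (N : ℝ) ≤ #𝒲 := by
    have hV₀ : k ≤ Fintype.card V := hRr ▸ card_le_univ V₀
    refine hH.half_choose_le_card_link_filter_disjoint hk (hd x₀) (hk.trans hV₀) (le_trans ?_ hV)
    rw [hRr]
    push_cast
    nlinarith [(Nat.cast_nonneg k : (0 : ℝ) ≤ k)]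
  have hframes (W : Finset V) (hW : W ∈ 𝒲) :=
    hH.exists_frames_of_mem_link hk hb hd hV hX hRr (mem_filter.1 hW).1 (mem_filter.1 hW).2
  choose! T hTc hT using hframes
  have hfiber := card_le_factorial_mul_ncard_absorbingSets fun a (ha : a ∈ 𝒲.sigma T) =>
    hT a.1 (mem_sigma.1 ha).1 a.2 (mem_sigma.1 ha).2
  rw [div_le_iff₀ (by positivity)]
  calc b ^ k * (N : ℝ) ^ (k + 1) = 2 * (1 / 2 * N * (b * N) ^ k) := by rw [mul_pow, pow_succ]; ring
    _ ≤ 2 * (#𝒲 * (b * N) ^ k) := by gcongr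
    _ = 2 * ∑ _ ∈ 𝒲, (b * N) ^ k := by rw [sum_const, nsmul_eq_mul]
    _ ≤ 2 * ∑ W ∈ 𝒲, (#(T W) : ℝ) := by gcongr with W hW; exact hTc W hW
    _ = 2 * #(𝒲.sigma T) := by rw [card_sigma, Nat.cast_sum]
    _ ≤ 2 * ((k ^ 2).factorial * (absorbingSets k H (partiteEdge x₀ V₀)).ncard : ℕ) := by gcongr
    _ = _ := by push_cast; ring

end AbsorbingSets

open Finset in
theorem count_absorbing_sets_general {k : ℕ} (hk : 1 ≤ k) {b : ℝ} (hb : 0 < b) :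
    ∃ N : ℕ, ∀ (X V : Type*) [DecidableEq X] [DecidableEq V] [Fintype X] [Fintype V],
      N ≤ Fintype.card V → Fintype.card V / k ≤ Fintype.card X →
      ∀ H : Finset (Finset (X ⊕ V)), IsPartite k H →
      (∀ x v, (1 / 2 + b) * (Fintype.card V - 1).choose (k - 1) ≤
        (#{e ∈ H | Sum.inl x ∈ e ∧ Sum.inr v ∈ e} : ℝ)) →
      ∀ R : Finset (X ⊕ V), #R.toLeft = 1 → #R.toRight = k →
      b ^ k * ((Fintype.card V).choose k : ℝ) ^ (k + 1) / (2 * ((k ^ 2).factorial : ℝ)) ≤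
        ((absorbingSets k H R).ncard : ℝ) := by
  refine ⟨⌈2 * k * (1 + 2 * b + ((k + 1) ^ 2 : ℕ)) / b⌉₊ + (3 * k + 3 * k * (k + 1) ^ 2),
    fun X V _ _ _ _ hn hX H hH hd R hRl hRr => ?_⟩
  refine hH.le_ncard_absorbingSets hk hb (fun x v => ?_) ?_ ?_ hRl hRr
  · rw [hH.card_filter_mem_link]
    exact hd x v
  · rw [mul_comm b, ← div_le_iff₀ hb]
    exact Nat.ceil_le.1 ((Nat.le_add_right _ _).trans hn)
  · have hdiv : (Fintype.card V : ℝ) ≤ (Fintype.card X + 1) * k :=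
      mod_cast (Nat.lt_mul_of_div_lt (Nat.lt_succ_of_le hX) hk).le
    have hn' : (3 * k + 3 * k * (k + 1) ^ 2 : ℝ) ≤ Fintype.card V :=
      mod_cast (Nat.le_add_left _ _).trans hn
    push_cast
    linarith

/-- Let `k ≥ 3`, `0 < b < 1/k`, and let `n` be sufficiently large.
Let `H` be a `(1,k)`-partite `(k+1)`-graph with partition classes `X = Fin (n/k)`
and `[n]` such that `δ₁(N_H(x)) > (1/2 + b)·C(n-1,k-1)` for every `x ∈ X`. Then for
every balanced `(k+1)`-set `R` (one vertex in `X`, `k` in `[n]`), the number of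
`R`-absorbing balanced `k(k+1)`-sets `Q` (i.e. with `|Q ∩ X| = k`, `|Q ∩ [n]| = k²`,
and both `H[Q]` and `H[Q ∪ R]` having perfect matchings) is at least
`b^k · C(n,k)^{k+1} / (2·(k²)!)`. -/
theorem count_absorbing_sets (k : ℕ) (hk : 3 ≤ k) (b : ℝ)
    (hb0 : 0 < b) (hb1 : b < 1 / (k : ℝ)) :
    ∃ N : ℕ, ∀ n : ℕ, N ≤ n →
    ∀ H : Finset (Finset (Fin (n / k) ⊕ Fin n)),
      (∀ e ∈ H, ∃ (x : Fin (n / k)) (s : Finset (Fin n)),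
        s.card = k ∧ e = insert (Sum.inl x) (s.image Sum.inr)) →
      (∀ (x : Fin (n / k)) (v : Fin n),
        (1 / 2 + b) * (Nat.choose (n - 1) (k - 1) : ℝ)
          < ((H.filter (fun e => Sum.inl x ∈ e ∧ Sum.inr v ∈ e)).card : ℝ)) →
      ∀ R : Finset (Fin (n / k) ⊕ Fin n),
        (R.filter (fun v => v.isLeft = true)).card = 1 →
        (R.filter (fun v => v.isRight = true)).card = k →
        b ^ k * ((Nat.choose n k : ℝ)) ^ (k + 1) / (2 * (Nat.factorial (k ^ 2) : ℝ))
          ≤ ({Q : Finset (Fin (n / k) ⊕ Fin n) |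
              (Q.filter (fun v => v.isLeft = true)).card = k ∧
              (Q.filter (fun v => v.isRight = true)).card = k ^ 2 ∧
              HasPM H Q ∧ HasPM H (Q ∪ R)}.ncard : ℝ) := by
  obtain ⟨N, hN⟩ := count_absorbing_sets_general (by omega : 1 ≤ k) hb0
  refine ⟨N, fun n hn H hH hd R hRl hRr => ?_⟩
  simp only [card_filter_isLeft, card_filter_isRight] at hRl hRr ⊢
  simpa only [Fintype.card_fin] using! hN (Fin (n / k)) (Fin n) (by simpa using hn) (by simp) H
    (isPartite_iff.2 hH) (by simpa only [Fintype.card_fin] using fun x v => (hd x v).le) R hRl hRr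
end

section
/- Let ε be a sufficiently small positive constant, and let n, k be integers with k ≥ 3 and n ≥ 40k^2/ε. Set a_1 = ε/(8k), a_2 = ε/(8k^3), and let a_3 < ε/(2^k · k! · 8k). Let H be a (1,k)-partite (k+1)-graph with partition classes X, [n], |X| = n/k. Suppose that d_H({x,v}) ≥ binom(n-1,k-1) - binom(n-n/k,k-1) - a_3·n^{k-1} for every x ∈ X and v ∈ [n], and that |E(𝓗_k(n,n/k)) \ E(H_0)| ≥ ε·e(𝓗_k(n,n/k)) for every isomorphic copy H_0 of H with V(H_0) = V(𝓗_k(n,n/k)). Then H is (𝓐, a_1)-dense, where 𝓐 = { A ⊆ V(H) : |A ∩ X| ≥ (1/k - a_1)n and |A ∩ [n]| ≥ (1 - 1/k - a_2)n }. -/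
/-!
Suppose `H` spans few edges on `A`, and choose `W ⊆ [n]` of size `n - n/k` as close to `A ∩ [n]` as
possible. For `x ∈ A ∩ X` there are at most `C(n-1,k-1) - C(n-n/k-1,k-1)` crossing `k`-sets through
a given `v ∈ W`, which is barely more than the number of link edges of `x` through `v`. Hence every
crossing set through `v` missing from the link of `x` is paid for by a link edge through `v` inside
`W`, and there are few of those: almost all link edges inside `W` lie inside `A`. Summing over the
vertices of `W` and over `x`, the copy of `𝓗_k(n, n/k)` whose large class is `W` misses fewer than
an `ε`-fraction of its edges in `H`, so `H` is close to the extremal configuration.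
-/

section

open Finset

section Binomials

lemma mul_choose_sub_one {k : ℕ} (hk : k ≠ 0) (n : ℕ) :
    n * (n - 1).choose (k - 1) = k * n.choose k := by
  obtain ⟨j, rfl⟩ := Nat.exists_eq_succ_of_ne_zero hk
  rcases n with _ | p
  · simp
  · simpa [mul_comm] using Nat.add_one_mul_choose_eq p j

lemma mul_choose_eq_mul_choose_sub_one_add (n k : ℕ) :
    n * n.choose k = n * (n - 1).choose k + k * n.choose k := by
  rcases n with _ | p
  · cases k <;> simp
  rcases le_or_gt k (p + 1) with hk | hk
  · have h := Nat.choose_mul_succ_eq p k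
    rw [Nat.add_sub_cancel, mul_comm (p + 1) (p.choose k), h, mul_comm _ (p + 1 - k), ← add_mul,
      Nat.sub_add_cancel hk]
  · simp [Nat.choose_eq_zero_of_lt hk, Nat.choose_eq_zero_of_lt (Nat.lt_of_succ_lt hk)]

lemma pow_mul_choose_le {p n : ℕ} (h : p ≤ n) (k : ℕ) :
    n ^ k * p.choose k ≤ p ^ k * n.choose k := by
  refine Nat.le_of_mul_le_mul_left (c := k.factorial) ?_ k.factorial_pos
  rw [mul_left_comm, mul_left_comm k.factorial, ← Nat.descFactorial_eq_factorial_mul_choose,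
    ← Nat.descFactorial_eq_factorial_mul_choose, Nat.descFactorial_eq_prod_range,
    Nat.descFactorial_eq_prod_range]
  calc n ^ k * ∏ i ∈ range k, (p - i) = ∏ i ∈ range k, n * (p - i) := by
        rw [prod_mul_distrib, prod_const, card_range]
    _ ≤ ∏ i ∈ range k, p * (n - i) := by
        refine prod_le_prod' fun i _ => ?_
        rw [Nat.mul_sub, Nat.mul_sub, mul_comm n p]
        exact Nat.sub_le_sub_left (Nat.mul_le_mul_right i h) _
    _ = p ^ k * ∏ i ∈ range k, (n - i) := by
        rw [prod_mul_distrib, prod_const, card_range]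

lemma choose_le_div_pow_mul {p n : ℕ} (h : p ≤ n) (k : ℕ) :
    (p.choose k : ℝ) ≤ (p / n : ℝ) ^ k * n.choose k := by
  rcases n.eq_zero_or_pos with rfl | hn
  · obtain rfl := Nat.le_zero.1 h
    cases k <;> simp
  rw [div_pow, div_mul_eq_mul_div, le_div_iff₀ (by positivity), mul_comm]
  exact_mod_cast pow_mul_choose_le h k

lemma pow_le_two_pow_mul_factorial_mul_choose {n k : ℕ} (h : 2 * k ≤ n) :
    n ^ k ≤ 2 ^ k * k.factorial * n.choose k := by
  calc n ^ k ≤ (2 * (n + 1 - k)) ^ k := Nat.pow_le_pow_left (by omega) k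
    _ = 2 ^ k * (n + 1 - k) ^ k := mul_pow _ _ _
    _ ≤ 2 ^ k * n.descFactorial k := by
        gcongr
        exact Nat.pow_sub_le_descFactorial n k
    _ = 2 ^ k * k.factorial * n.choose k := by
        rw [Nat.descFactorial_eq_factorial_mul_choose, mul_assoc]

lemma le_mul_div_add_one {k : ℕ} (hk : k ≠ 0) (n : ℕ) : (n : ℝ) ≤ k * ((n / k : ℕ) + 1) := by
  exact_mod_cast (Nat.lt_mul_div_succ n (Nat.pos_of_ne_zero hk)).le

lemma choose_div_le {k : ℕ} (hk : 2 ≤ k) (n : ℕ) :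
    ((n / k).choose k : ℝ) ≤ 1 / 4 * n.choose k := by
  have hratio : ((n / k : ℕ) / n : ℝ) ≤ 1 / 2 := by
    refine div_le_of_le_mul₀ n.cast_nonneg (by norm_num) (Nat.cast_div_le.trans ?_)
    rw [div_eq_inv_mul, one_div]
    gcongr
    exact_mod_cast hk
  calc ((n / k).choose k : ℝ) ≤ ((n / k : ℕ) / n : ℝ) ^ k * n.choose k :=
        choose_le_div_pow_mul (Nat.div_le_self n k) k
    _ ≤ (1 / 2) ^ k * n.choose k := by gcongr
    _ ≤ (1 / 2) ^ 2 * n.choose k := by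
        gcongr ?_ * _
        exact pow_le_pow_of_le_one (by norm_num) (by norm_num) hk
    _ = 1 / 4 * n.choose k := by norm_num

lemma exp_neg_seventyNine_div_eighty_le : Real.exp (-(79 / 80)) ≤ 3 / 8 := by
  have hlower : 8 / 3 ≤ Real.exp (79 / 80) := by
    calc (8 / 3 : ℝ) ≤ Real.exp 1 * (-(1 / 80) + 1) := by linarith [Real.exp_one_gt_d9]
      _ ≤ Real.exp 1 * Real.exp (-(1 / 80)) := by
          gcongr
          exact Real.add_one_le_exp _
      _ = Real.exp (79 / 80) := by rw [← Real.exp_add]; norm_num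
  rw [Real.exp_neg]
  exact inv_le_of_inv_le₀ (by norm_num) (by norm_num; exact hlower)

lemma choose_sub_div_le {n k : ℕ} (hk : k ≠ 0) (hkn : 80 * k ≤ n) :
    ((n - n / k).choose k : ℝ) ≤ 3 / 8 * n.choose k := by
  have hn : (0 : ℝ) < n := by exact_mod_cast (by omega : 0 < n)
  have hkn' : 80 * (k : ℝ) ≤ n := by exact_mod_cast hkn
  have hratio : ((n - n / k : ℕ) / n : ℝ) = 1 - (n / k : ℕ) / n := by
    rw [Nat.cast_sub (Nat.div_le_self n k), sub_div, div_self hn.ne']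
  have hkm : 79 / 80 ≤ k * ((n / k : ℕ) / n : ℝ) := by
    rw [← mul_div_assoc, le_div_iff₀ hn]
    linarith [le_mul_div_add_one hk n]
  calc ((n - n / k).choose k : ℝ) ≤ ((n - n / k : ℕ) / n : ℝ) ^ k * n.choose k :=
        choose_le_div_pow_mul (Nat.sub_le _ _) k
    _ ≤ Real.exp (-((n / k : ℕ) / n)) ^ k * n.choose k := by
        gcongr
        exact hratio.trans_le (Real.one_sub_le_exp_neg _)
    _ = Real.exp (-(k * ((n / k : ℕ) / n))) * n.choose k := by
        rw [← Real.exp_nat_mul, mul_neg]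
    _ ≤ Real.exp (-(79 / 80)) * n.choose k := by gcongr
    _ ≤ 3 / 8 * n.choose k := by
        gcongr
        exact exp_neg_seventyNine_div_eighty_le

variable {ε : ℝ} {k n : ℕ}

lemma mul_choose_sub_one_le (hk : k ≠ 0) (hkn : 40 * (k : ℝ) ^ 2 ≤ ε * n) :
    (k : ℝ) * (n - 1).choose (k - 1) ≤ ε / 40 * n.choose k := by
  have hmul : (n : ℝ) * (n - 1).choose (k - 1) = k * n.choose k := by
    exact_mod_cast mul_choose_sub_one hk n
  refine le_of_mul_le_mul_left ?_ (by positivity : 0 < 40 * (k : ℝ))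
  calc 40 * (k : ℝ) * (k * (n - 1).choose (k - 1))
      = 40 * (k : ℝ) ^ 2 * (n - 1).choose (k - 1) := by ring
    _ ≤ ε * n * (n - 1).choose (k - 1) := by gcongr
    _ = 40 * k * (ε / 40 * n.choose k) := by rw [mul_assoc, hmul]; ring

lemma mul_choose_sub_one_mul_one_add_le (hε : 0 ≤ ε) (hk : 2 ≤ k)
    (hkn : 40 * (k : ℝ) ^ 2 ≤ ε * n) {w : ℝ} (hw : w ≤ 1 + ε / (8 * (k : ℝ) ^ 3) * n) :
    (k : ℝ) * (n - 1).choose (k - 1) * (1 + w) ≤ 9 / 80 * ε * n.choose k := by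
  have hk0 : (k : ℝ) ≠ 0 := by positivity
  have hk2 : (2 : ℝ) ≤ k := by exact_mod_cast hk
  have hmul : (n : ℝ) * (n - 1).choose (k - 1) = k * n.choose k := by
    exact_mod_cast mul_choose_sub_one (by omega) n
  calc (k : ℝ) * (n - 1).choose (k - 1) * (1 + w)
      ≤ k * (n - 1).choose (k - 1) * (1 + (1 + ε / (8 * (k : ℝ) ^ 3) * n)) := by gcongr
    _ = 2 * (k * (n - 1).choose (k - 1)) +
          ε / (8 * (k : ℝ) ^ 2) * (n * (n - 1).choose (k - 1)) := by field_simp; ring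
    _ = 2 * (k * (n - 1).choose (k - 1)) + ε / (8 * k) * n.choose k := by
        rw [hmul]; field_simp
    _ ≤ 2 * (ε / 40 * n.choose k) + ε / (8 * 2) * n.choose k :=
        add_le_add (by linarith [mul_choose_sub_one_le (by omega) hkn]) (by gcongr)
    _ = 9 / 80 * ε * n.choose k := by ring

lemma div_mul_pow_le_mul_choose (hε : 0 ≤ ε) (hk : 2 ≤ k) (hkn : 2 * k ≤ n) :
    ε / (2 ^ k * (k.factorial : ℝ) * (8 * k)) * (n : ℝ) ^ k ≤ 1 / 16 * ε * n.choose k := by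
  have hpow : (n : ℝ) ^ k ≤ 2 ^ k * k.factorial * n.choose k := by
    exact_mod_cast pow_le_two_pow_mul_factorial_mul_choose hkn
  have hk2 : (2 : ℝ) ≤ k := by exact_mod_cast hk
  calc ε / (2 ^ k * (k.factorial : ℝ) * (8 * k)) * (n : ℝ) ^ k
      ≤ ε / (2 ^ k * (k.factorial : ℝ) * (8 * k)) * (2 ^ k * k.factorial * n.choose k) := by
        gcongr
    _ = ε / (8 * k) * n.choose k := by field_simp
    _ ≤ ε / (8 * 2) * n.choose k := by gcongr
    _ = 1 / 16 * ε * n.choose k := by ring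

lemma div_sub_le_of_le (hε : 0 ≤ ε) (hm : 10 ≤ n / k) {q : ℝ}
    (hq : (1 / (k : ℝ) - ε / (8 * k)) * n ≤ q) :
    ((n / k : ℕ) : ℝ) - q ≤ 11 / 80 * ε * (n / k : ℕ) := by
  have hk : k ≠ 0 := by rintro rfl; simp at hm
  have hk0 : (k : ℝ) ≠ 0 := by exact_mod_cast hk
  have hm' : (10 : ℝ) ≤ (n / k : ℕ) := by exact_mod_cast hm
  calc ((n / k : ℕ) : ℝ) - q ≤ n / k - (1 / (k : ℝ) - ε / (8 * k)) * n := by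
        gcongr
        exact Nat.cast_div_le
    _ = ε / (8 * k) * n := by ring
    _ ≤ ε / (8 * k) * (k * ((n / k : ℕ) + 1)) := by
        gcongr
        exact le_mul_div_add_one hk n
    _ = ε / 8 * ((n / k : ℕ) + 1) := by field_simp
    _ ≤ ε / 8 * ((n / k : ℕ) + (n / k : ℕ) / 10) := by gcongr; linarith
    _ = 11 / 80 * ε * (n / k : ℕ) := by ring

end Binomials

section Crossing

variable {V : Type*} [DecidableEq V] {k : ℕ} {L : Finset (Finset V)}

lemma card_filter_mem_powersetCard {S : Finset V} {v : V} (hv : v ∈ S) (hk : 1 ≤ k) :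
    #{s ∈ powersetCard k S | v ∈ s} = (#S - 1).choose (k - 1) := by
  simpa using card_filter_powersetCard_subset {v} S k (singleton_subset_iff.2 hv)
    (by simpa using hk)

lemma sum_card_filter_subset_filter_mem (hL : ∀ s ∈ L, #s = k) (W : Finset V) :
    ∑ v ∈ W, #{s ∈ {s ∈ L | s ⊆ W} | v ∈ s} = k * #{s ∈ L | s ⊆ W} := by
  calc ∑ v ∈ W, #{s ∈ {s ∈ L | s ⊆ W} | v ∈ s}
      = ∑ s ∈ {s ∈ L | s ⊆ W}, #{v ∈ W | v ∈ s} :=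
        sum_card_bipartiteAbove_eq_sum_card_bipartiteBelow _
    _ = ∑ _ ∈ {s ∈ L | s ⊆ W}, k := by
        refine sum_congr rfl fun _ hs => ?_
        obtain ⟨hsL, hsW⟩ := mem_filter.1 hs
        rw [filter_mem_eq_inter, inter_eq_right.2 hsW, hL _ hsL]
    _ = k * #{s ∈ L | s ⊆ W} := by rw [sum_const, smul_eq_mul, mul_comm]

lemma exists_perm_image_eq [Finite V] {S T : Finset V} (h : #S = #T) :
    ∃ τ : Equiv.Perm V, S.image τ = T := by
  let e : {v // v ∈ S} ≃ {v // v ∈ T} := S.equivOfCardEq h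
  refine ⟨e.extendSubtype, eq_of_subset_of_card_le ?_ ?_⟩
  · exact image_subset_iff.2 fun v hv => e.extendSubtype_mem v hv
  · rw [card_image_of_injective _ e.extendSubtype.injective, h]

variable [Fintype V]

/-- The `k`-sets meeting both `W` and its complement. With `W = [n] \ [n/k]` this is the `k`-graph
`H_k(n, n/k)`. -/
def crossing (k : ℕ) (W : Finset V) : Finset (Finset V) :=
  {s ∈ powersetCard k univ | ¬s ⊆ W ∧ ¬s ⊆ Wᶜ}

lemma mem_crossing {W s : Finset V} :
    s ∈ crossing k W ↔ #s = k ∧ ¬s ⊆ W ∧ ¬s ⊆ Wᶜ := by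
  simp [crossing]

lemma crossing_nonempty (hk : 2 ≤ k) (hkV : k ≤ Fintype.card V) {W : Finset V}
    (hW : W.Nonempty) (hWc : Wᶜ.Nonempty) : (crossing k W).Nonempty := by
  obtain ⟨v, hv⟩ := hW
  obtain ⟨u, hu⟩ := hWc
  obtain ⟨s, hs, hsk⟩ := exists_superset_card_eq (card_le_two.trans hk : #{u, v} ≤ k) hkV
  rw [insert_subset_iff, singleton_subset_iff] at hs
  exact ⟨s, mem_crossing.2
    ⟨hsk, fun h => mem_compl.1 hu (h hs.1), fun h => mem_compl.1 (h hs.2) hv⟩⟩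

lemma crossing_image (k : ℕ) (W : Finset V) (τ : Equiv.Perm V) :
    crossing k (W.image τ) = (crossing k W).image (image τ) := by
  ext s
  obtain ⟨t, rfl⟩ : ∃ t : Finset V, s = t.image τ := ⟨s.image τ.symm, by simp [image_image]⟩
  have hcompl : Wᶜ.image τ = (W.image τ)ᶜ := by simp [compl_eq_univ_sdiff, image_sdiff, τ.injective]
  rw [(image_injective τ.injective).mem_finset_image, mem_crossing, mem_crossing,
    card_image_of_injective _ τ.injective, ← hcompl,
    image_subset_image_iff τ.injective, image_subset_image_iff τ.injective]

lemma card_crossing_ge (k : ℕ) (W : Finset V) :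
    (Fintype.card V).choose k ≤ #(crossing k W) + (#W).choose k + (#Wᶜ).choose k := by
  rw [← card_powersetCard k W, ← card_powersetCard k Wᶜ, ← card_univ, ← card_powersetCard k univ]
  refine (card_le_card (t := crossing k W ∪ powersetCard k W ∪ powersetCard k Wᶜ) ?_).trans
    ((card_union_le _ _).trans (Nat.add_le_add_right (card_union_le _ _) _))
  intro s hs
  simp only [mem_union, mem_crossing, mem_powersetCard] at hs ⊢
  tauto

lemma three_eighths_mul_choose_le_card_crossing {n : ℕ} (hk : 2 ≤ k) (hkn : 80 * k ≤ n)
    (hV : Fintype.card V = n) {W : Finset V} (hW : #W = n - n / k) :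
    3 / 8 * (n.choose k : ℝ) ≤ #(crossing k W) := by
  have hcover := card_crossing_ge k W
  rw [card_compl, hV, hW, Nat.sub_sub_self (Nat.div_le_self n k)] at hcover
  have hcover' : (n.choose k : ℝ) ≤
      #(crossing k W) + (n - n / k).choose k + (n / k).choose k := by exact_mod_cast hcover
  linarith [choose_sub_div_le (by omega : k ≠ 0) hkn, choose_div_le hk n]

lemma card_filter_subset_le (hk : 1 ≤ k) (hL : ∀ s ∈ L, #s = k) (W B : Finset V) :
    #{s ∈ L | s ⊆ W} ≤
      #{s ∈ L | s ⊆ B} + #(W \ B) * (Fintype.card V - 1).choose (k - 1) := by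
  have hcover : {s ∈ L | s ⊆ W} ⊆ {s ∈ L | s ⊆ B} ∪
      (W \ B).biUnion fun w => {s ∈ powersetCard k univ | w ∈ s} := by
    intro s
    simp only [mem_union, mem_filter, mem_biUnion, mem_sdiff, mem_powersetCard, subset_iff,
      mem_univ]
    grind
  refine (card_le_card hcover).trans ((card_union_le _ _).trans (Nat.add_le_add_left ?_ _))
  refine card_biUnion_le_card_mul _ _ _ fun w _ => ?_
  rw [card_filter_mem_powersetCard (mem_univ w) hk, card_univ]

lemma card_crossing_sdiff_filter_mem_add_le (hk : 1 ≤ k) (hL : ∀ s ∈ L, #s = k) {W : Finset V}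
    {v : V} (hv : v ∈ W) :
    #{s ∈ crossing k W \ L | v ∈ s} + #{s ∈ L | v ∈ s} + (#W - 1).choose (k - 1) ≤
      (Fintype.card V - 1).choose (k - 1) + #{s ∈ {s ∈ L | s ⊆ W} | v ∈ s} := by
  rw [← card_filter_mem_powersetCard hv hk, ← card_univ,
    ← card_filter_mem_powersetCard (mem_univ v) hk, ← card_union_of_disjoint,
    ← card_union_add_card_inter]
  · refine Nat.add_le_add (card_le_card fun s => ?_) (card_le_card fun s => ?_)
    · simp only [mem_crossing, mem_union, mem_filter, mem_powersetCard, mem_sdiff, subset_univ]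
      grind
    · simp only [mem_crossing, mem_union, mem_inter, mem_filter, mem_powersetCard, mem_sdiff]
      tauto
  · rw [disjoint_left]
    intro s
    simp only [mem_filter, mem_sdiff]
    tauto

lemma card_crossing_sdiff_add_sum_le (hk : 1 ≤ k) (hL : ∀ s ∈ L, #s = k) (W : Finset V) :
    #(crossing k W \ L) + ∑ v ∈ W, #{s ∈ L | v ∈ s} + #W * (#W - 1).choose (k - 1) ≤
      #W * (Fintype.card V - 1).choose (k - 1) + k * #{s ∈ L | s ⊆ W} := by
  have hcover : #(crossing k W \ L) ≤ ∑ v ∈ W, #{s ∈ crossing k W \ L | v ∈ s} := by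
    refine (card_le_card fun s hs => ?_).trans card_biUnion_le
    have hsW := (mem_crossing.1 (mem_sdiff.1 hs).1).2.2
    obtain ⟨v, hvs, hvW⟩ := not_subset.1 hsW
    exact mem_biUnion.2 ⟨v, by simpa using hvW, mem_filter.2 ⟨hs, hvs⟩⟩
  have hlocal := sum_le_sum fun v (hv : v ∈ W) => card_crossing_sdiff_filter_mem_add_le hk hL hv
  simp only [sum_add_distrib, sum_const, smul_eq_mul,
    sum_card_filter_subset_filter_mem hL W] at hlocal
  omega

lemma card_crossing_sdiff_le (hk : 1 ≤ k) (hL : ∀ s ∈ L, #s = k) {W : Finset V}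
    (hW : #W < Fintype.card V) {δ : ℝ}
    (hdeg : ∀ v ∈ W, ((Fintype.card V - 1).choose (k - 1) : ℝ) - (#W).choose (k - 1) - δ ≤
      #{s ∈ L | v ∈ s}) (B : Finset V) :
    (#(crossing k W \ L) : ℝ) ≤ k * #{s ∈ L | s ⊆ B} +
      k * (Fintype.card V - 1).choose (k - 1) * (1 + #(W \ B)) + #W * δ := by
  have hcount : (#(crossing k W \ L) : ℝ) + ∑ v ∈ W, (#{s ∈ L | v ∈ s} : ℝ) +
      #W * (#W - 1).choose (k - 1) ≤
      #W * (Fintype.card V - 1).choose (k - 1) + k * #{s ∈ L | s ⊆ W} := by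
    exact_mod_cast card_crossing_sdiff_add_sum_le hk hL W
  have hdegsum := card_nsmul_le_sum W _ _ hdeg
  have hinside : (k : ℝ) * #{s ∈ L | s ⊆ W} ≤
      k * (#{s ∈ L | s ⊆ B} + #(W \ B) * (Fintype.card V - 1).choose (k - 1)) := by
    gcongr
    exact_mod_cast card_filter_subset_le hk hL W B
  have hpascal : (#W : ℝ) * (#W).choose (k - 1) ≤
      #W * (#W - 1).choose (k - 1) + k * (Fintype.card V - 1).choose (k - 1) := by
    norm_cast
    rw [mul_choose_eq_mul_choose_sub_one_add]
    gcongr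
    · omega
    · omega
  rw [nsmul_eq_mul] at hdegsum
  linarith

lemma card_crossing_sdiff_le_of_sdiff_le {n : ℕ} (hV : Fintype.card V = n) {ε : ℝ} (hε : 0 ≤ ε)
    (hk : 2 ≤ k) (hkn : 40 * (k : ℝ) ^ 2 ≤ ε * n) (h2kn : 2 * k ≤ n) {a : ℝ}
    (ha : a ≤ ε / (2 ^ k * (k.factorial : ℝ) * (8 * k))) (hL : ∀ s ∈ L, #s = k)
    {W B : Finset V} (hW : #W < n)
    (hdeg : ∀ v ∈ W, ((n - 1).choose (k - 1) : ℝ) - (#W).choose (k - 1) - a * (n : ℝ) ^ (k - 1) ≤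
      #{s ∈ L | v ∈ s})
    (hWB : (#(W \ B) : ℝ) ≤ 1 + ε / (8 * (k : ℝ) ^ 3) * n) :
    (#(crossing k W \ L) : ℝ) ≤ k * #{s ∈ L | s ⊆ B} + 7 / 40 * ε * n.choose k := by
  subst hV
  have hmissing := card_crossing_sdiff_le (by omega) hL hW hdeg B
  have hwaste := mul_choose_sub_one_mul_one_add_le hε hk hkn hWB
  have hslack : (#W : ℝ) * (a * (Fintype.card V : ℝ) ^ (k - 1)) ≤
      1 / 16 * ε * (Fintype.card V).choose k := by
    calc (#W : ℝ) * (a * (Fintype.card V : ℝ) ^ (k - 1))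
        ≤ Fintype.card V * (ε / (2 ^ k * (k.factorial : ℝ) * (8 * k)) *
            (Fintype.card V : ℝ) ^ (k - 1)) := by
          refine (mul_le_mul_of_nonneg_left (b := _) ?_ (#W).cast_nonneg).trans
            (mul_le_mul_of_nonneg_right (Nat.cast_le.2 hW.le) (by positivity))
          gcongr
      _ = ε / (2 ^ k * (k.factorial : ℝ) * (8 * k)) * (Fintype.card V : ℝ) ^ k := by
          rw [mul_left_comm, mul_pow_sub_one (by omega)]
      _ ≤ 1 / 16 * ε * (Fintype.card V).choose k := div_mul_pow_le_mul_choose hε hk h2kn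
  linarith

lemma exists_card_eq_and_card_sdiff_eq (B : Finset V) {r : ℕ} (hr : r ≤ Fintype.card V) :
    ∃ W : Finset V, #W = r ∧ #(W \ B) = r - #B := by
  rcases le_total r #B with h | h
  · obtain ⟨W, hWB, hW⟩ := exists_subset_card_eq h
    exact ⟨W, hW, by rw [sdiff_eq_empty_iff_subset.2 hWB, card_empty, Nat.sub_eq_zero_of_le h]⟩
  · obtain ⟨W, hBW, hW⟩ := exists_superset_card_eq h hr
    exact ⟨W, hW, by rw [card_sdiff_of_subset hBW, hW]⟩

lemma exists_card_eq_sub_div_and_card_sdiff_le {n : ℕ} (hV : Fintype.card V = n) (hk : k ≠ 0)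
    {η : ℝ} (hη : 0 ≤ η) {B : Finset V} (hB : (1 - 1 / (k : ℝ) - η) * n ≤ #B) :
    ∃ W : Finset V, #W = n - n / k ∧ (#(W \ B) : ℝ) ≤ 1 + η * n := by
  obtain ⟨W, hW, hWB⟩ := exists_card_eq_and_card_sdiff_eq B
    ((Nat.sub_le n (n / k)).trans_eq hV.symm)
  refine ⟨W, hW, ?_⟩
  have hdiv : (n : ℝ) / k ≤ (n / k : ℕ) + 1 :=
    div_le_of_le_mul₀ k.cast_nonneg (by positivity) (by linarith [le_mul_div_add_one hk n])
  rcases le_total (n - n / k) #B with h | h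
  · rw [hWB, Nat.sub_eq_zero_of_le h, Nat.cast_zero]
    positivity
  · rw [hWB, Nat.cast_sub h, Nat.cast_sub (Nat.div_le_self n k)]
    linarith [(by ring : (1 - 1 / (k : ℝ) - η) * n = n - n / k - η * n)]

lemma card_crossing_congr {W W' : Finset V} (h : #W = #W') :
    #(crossing k W) = #(crossing k W') := by
  obtain ⟨τ, rfl⟩ := exists_perm_image_eq h
  rw [crossing_image, card_image_of_injective _ (image_injective τ.injective)]

lemma sum_card_crossing_sdiff_le {α : Type*} [Fintype α] {L : α → Finset (Finset V)}
    {A : Finset α} {B W : Finset V} {η : ℝ}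
    (h : ∀ x ∈ A, (#(crossing k W \ L x) : ℝ) ≤ k * #{s ∈ L x | s ⊆ B} + η) :
    ∑ x, (#(crossing k W \ L x) : ℝ) ≤ k * ∑ x ∈ A, (#{s ∈ L x | s ⊆ B} : ℝ) + #A * η +
      (Fintype.card α - #A) * #(crossing k W) := by
  classical
  have hcompl : ∑ x ∈ Aᶜ, (#(crossing k W \ L x) : ℝ) ≤
      (Fintype.card α - #A) * #(crossing k W) := by
    rw [← Nat.cast_sub (card_le_univ A), ← card_compl, ← nsmul_eq_mul]
    exact sum_le_card_nsmul _ _ _ fun x _ => Nat.cast_le.2 (card_le_card sdiff_subset)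
  calc ∑ x, (#(crossing k W \ L x) : ℝ)
      = ∑ x ∈ A, (#(crossing k W \ L x) : ℝ) + ∑ x ∈ Aᶜ, (#(crossing k W \ L x) : ℝ) :=
        (sum_add_sum_compl A _).symm
    _ ≤ ∑ x ∈ A, ((k : ℝ) * #{s ∈ L x | s ⊆ B} + η) +
          (Fintype.card α - #A) * #(crossing k W) := add_le_add (sum_le_sum h) hcompl
    _ = k * ∑ x ∈ A, (#{s ∈ L x | s ⊆ B} : ℝ) + #A * η +
          (Fintype.card α - #A) * #(crossing k W) := by
        rw [sum_add_distrib, mul_sum, sum_const, nsmul_eq_mul]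

end Crossing

section Links

variable {α β : Type*} [DecidableEq α] [DecidableEq β]

lemma insert_inl_image_inr (x : α) (s : Finset β) :
    insert (Sum.inl x) (s.image Sum.inr) = disjSum {x} s := by
  ext (y | v) <;> simp

variable [Fintype α]

/-- The `(1,k)`-partite hypergraph on `α ⊕ β` in which each `x : α` has link `L x`, for a family of
`k`-graphs `L x`; the edge `{x} ∪ s` is encoded as `disjSum {x} s`. -/
def ofLinks (L : α → Finset (Finset β)) : Finset (Finset (α ⊕ β)) :=
  (univ.sigma L).image fun p => disjSum {p.1} p.2

variable {L : α → Finset (Finset β)}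

lemma mem_ofLinks {e : Finset (α ⊕ β)} :
    e ∈ ofLinks L ↔ ∃ x, ∃ s ∈ L x, disjSum {x} s = e := by
  simp [ofLinks]

lemma disjSum_mem_ofLinks {x : α} {s : Finset β} : disjSum {x} s ∈ ofLinks L ↔ s ∈ L x := by
  simp [mem_ofLinks]

lemma card_filter_ofLinks (L : α → Finset (Finset β)) (p : Finset (α ⊕ β) → Prop)
    [DecidablePred p] : #{e ∈ ofLinks L | p e} = ∑ x, #{s ∈ L x | p (disjSum {x} s)} := by
  rw [← card_sigma, ofLinks, filter_image, card_image_of_injective]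
  · congr 1
    ext ⟨x, s⟩
    simp
  · rintro ⟨x, s⟩ ⟨y, t⟩ h
    simpa using h

lemma card_ofLinks (L : α → Finset (Finset β)) : #(ofLinks L) = ∑ x, #(L x) := by
  simpa using card_filter_ofLinks L fun _ => True

lemma card_filter_subset_ofLinks (L : α → Finset (Finset β)) (A : Finset (α ⊕ β)) :
    #{e ∈ ofLinks L | e ⊆ A} = ∑ x ∈ A.toLeft, #{s ∈ L x | s ⊆ A.toRight} := by
  rw [card_filter_ofLinks, ← sum_subset (subset_univ A.toLeft)]
  · exact sum_congr rfl fun x hx => by simp [disjSum_subset, mem_toLeft.1 hx]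
  · intro x _ hx
    simp [disjSum_subset, mem_toLeft.not.1 hx]

lemma card_filter_mem_mem_ofLinks (L : α → Finset (Finset β)) (x : α) (v : β) :
    #{e ∈ ofLinks L | Sum.inl x ∈ e ∧ Sum.inr v ∈ e} = #{s ∈ L x | v ∈ s} := by
  rw [card_filter_ofLinks, sum_eq_single x]
  · simp
  · intro y _ hyx
    simp [hyx.symm]
  · simp

lemma card_ofLinks_sdiff (L M : α → Finset (Finset β)) :
    #(ofLinks L \ ofLinks M) = ∑ x, #(L x \ M x) := by
  simp only [sdiff_eq_filter, card_filter_ofLinks, disjSum_mem_ofLinks]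

lemma image_sumCongr_ofLinks (L : α → Finset (Finset β)) (τ : Equiv.Perm β) :
    (ofLinks L).image (image (Equiv.sumCongr (Equiv.refl α) τ)) =
      ofLinks fun x => (L x).image (image τ) := by
  have hedge (x : α) (s : Finset β) : (disjSum {x} s).image (Equiv.sumCongr (Equiv.refl α) τ) =
      disjSum {x} (s.image τ) := by
    ext (y | v) <;> simp [disjSum, eq_comm]
  ext e
  simp only [mem_image, mem_ofLinks]
  constructor
  · rintro ⟨_, ⟨x, s, hs, rfl⟩, rfl⟩
    exact ⟨x, _, ⟨s, hs, rfl⟩, (hedge x s).symm⟩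
  · rintro ⟨x, _, ⟨s, hs, rfl⟩, rfl⟩
    exact ⟨_, ⟨x, s, hs, rfl⟩, hedge x s⟩

lemma exists_eq_ofLinks {k : ℕ} {H : Finset (Finset (α ⊕ β))}
    (hH : ∀ e ∈ H, ∃ (x : α) (s : Finset β),
      #s = k ∧ e = insert (Sum.inl x) (s.image Sum.inr)) :
    ∃ L : α → Finset (Finset β), (∀ x, ∀ s ∈ L x, #s = k) ∧ H = ofLinks L := by
  simp only [insert_inl_image_inr] at hH
  refine ⟨fun x => {e ∈ H | Sum.inl x ∈ e}.image toRight, ?_, ?_⟩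
  · simp only [mem_image, mem_filter]
    rintro x _ ⟨e, ⟨he, -⟩, rfl⟩
    obtain ⟨y, s, hs, rfl⟩ := hH e he
    simpa using hs
  · ext e
    simp only [mem_ofLinks, mem_image, mem_filter]
    constructor
    · intro he
      obtain ⟨x, s, -, rfl⟩ := hH e he
      exact ⟨x, s, ⟨_, ⟨he, by simp⟩, by simp⟩, rfl⟩
    · rintro ⟨x, _, ⟨e, ⟨he, hxe⟩, rfl⟩, rfl⟩
      obtain ⟨y, s, -, rfl⟩ := hH e he
      obtain rfl : x = y := by simpa using hxe
      simpa using he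

variable [Fintype β]

lemma exists_perm_card_ofLinks_crossing_sdiff (L : α → Finset (Finset β)) (k : ℕ)
    {W W₀ : Finset β} (hW : #W = #W₀) :
    ∃ τ : Equiv.Perm β, #(ofLinks (fun _ : α => crossing k W₀) \
      (ofLinks L).image (image (Equiv.sumCongr (Equiv.refl α) τ))) =
        ∑ x, #(crossing k W \ L x) := by
  obtain ⟨τ, rfl⟩ := exists_perm_image_eq hW
  refine ⟨τ, ?_⟩
  rw [image_sumCongr_ofLinks, card_ofLinks_sdiff]
  refine sum_congr rfl fun x _ => ?_
  rw [crossing_image, ← image_sdiff _ _ (image_injective τ.injective),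
    card_image_of_injective _ (image_injective τ.injective)]

lemma le_card_of_ofLinks_nonempty {k : ℕ} (hL : ∀ x, ∀ s ∈ L x, #s = k)
    (h : (ofLinks L).Nonempty) : k ≤ Fintype.card β := by
  obtain ⟨e, he⟩ := h
  obtain ⟨x, s, hs, -⟩ := mem_ofLinks.1 he
  exact hL x s hs ▸ card_le_univ s

lemma card_ofLinks_le {k : ℕ} (hL : ∀ x, ∀ s ∈ L x, #s = k) :
    #(ofLinks L) ≤ Fintype.card α * (Fintype.card β).choose k := by
  rw [card_ofLinks, ← card_univ (α := β), ← card_powersetCard]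
  exact sum_le_card_nsmul _ _ _ fun x _ =>
    card_le_card fun s hs => mem_powersetCard.2 ⟨subset_univ s, hL x s hs⟩

lemma exists_sum_card_crossing_sdiff_lt {n k : ℕ} (hα : Fintype.card α = n / k)
    (hβ : Fintype.card β = n) {ε : ℝ} (hε : 0 < ε) (hk : 2 ≤ k)
    (hkn : 40 * (k : ℝ) ^ 2 ≤ ε * n) (h80 : 80 * k ≤ n) {a : ℝ}
    (ha : a ≤ ε / (2 ^ k * (k.factorial : ℝ) * (8 * k))) (hL : ∀ x, ∀ s ∈ L x, #s = k)
    (hdeg : ∀ x v, ((n - 1).choose (k - 1) : ℝ) - (n - n / k).choose (k - 1) -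
      a * (n : ℝ) ^ (k - 1) ≤ #{s ∈ L x | v ∈ s})
    {A : Finset α} {B : Finset β} (hA : (1 / (k : ℝ) - ε / (8 * k)) * n ≤ #A)
    (hB : (1 - 1 / (k : ℝ) - ε / (8 * (k : ℝ) ^ 3)) * n ≤ #B)
    (hsparse : (∑ x ∈ A, #{s ∈ L x | s ⊆ B} : ℝ) ≤ ε / (8 * k) * #(ofLinks L)) :
    ∃ W : Finset β, #W = n - n / k ∧
      ∑ x, (#(crossing k W \ L x) : ℝ) < ε * ((n / k : ℕ) * #(crossing k W)) := by
  obtain ⟨W, hW, hWB⟩ := exists_card_eq_sub_div_and_card_sdiff_le hβ (by omega) (by positivity) hB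
  refine ⟨W, hW, ?_⟩
  have hm : 10 ≤ n / k := (Nat.le_div_iff_mul_le (by omega)).2 (by omega)
  have hm0 : (0 : ℝ) < (n / k : ℕ) := by exact_mod_cast (by omega : 0 < n / k)
  have hN : (0 : ℝ) < n.choose k := by exact_mod_cast Nat.choose_pos (by omega)
  have hcross := three_eighths_mul_choose_le_card_crossing hk h80 hβ hW
  have hmissing := sum_card_crossing_sdiff_le fun x (_ : x ∈ A) =>
    card_crossing_sdiff_le_of_sdiff_le hβ hε.le hk hkn (by omega) ha (hL x) (by omega)
      (fun v _ => hW ▸ hdeg x v) hWB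
  have hAm : (#A : ℝ) ≤ (n / k : ℕ) := by exact_mod_cast hα ▸ card_le_univ A
  have hinduced : k * ∑ x ∈ A, (#{s ∈ L x | s ⊆ B} : ℝ) ≤
      1 / 8 * (ε * ((n / k : ℕ) * n.choose k)) := by
    have hedges : (#(ofLinks L) : ℝ) ≤ (n / k : ℕ) * n.choose k := by
      exact_mod_cast hα ▸ hβ ▸ card_ofLinks_le hL
    calc k * ∑ x ∈ A, (#{s ∈ L x | s ⊆ B} : ℝ)
        ≤ k * (ε / (8 * k) * ((n / k : ℕ) * n.choose k)) := by
          gcongr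
          exact hsparse.trans (by gcongr)
      _ = 1 / 8 * (ε * ((n / k : ℕ) * n.choose k)) := by
          have hk0 : (k : ℝ) ≠ 0 := by positivity
          field_simp
  rw [hα] at hmissing
  calc ∑ x, (#(crossing k W \ L x) : ℝ)
      ≤ 1 / 8 * (ε * ((n / k : ℕ) * n.choose k)) + (n / k : ℕ) * (7 / 40 * ε * n.choose k) +
          11 / 80 * ε * (n / k : ℕ) * #(crossing k W) := by
        refine hmissing.trans (add_le_add (add_le_add hinduced ?_) ?_)
        · gcongr
        · gcongr
          exact div_sub_le_of_le hε.le hm hA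
    _ = ε * ((n / k : ℕ) * (3 / 10 * n.choose k + 11 / 80 * #(crossing k W))) := by ring
    _ < ε * ((n / k : ℕ) * #(crossing k W)) := by
        gcongr
        linarith

end Links

section Extremal

lemma card_filter_isLeft_s11 {α β : Type*} (A : Finset (α ⊕ β)) :
    #{v ∈ A | v.isLeft = true} = #A.toLeft := by
  rw [← card_map Function.Embedding.inl (s := A.toLeft)]
  congr 1
  ext (x | v) <;> simp

lemma card_filter_isRight_s11 {α β : Type*} (A : Finset (α ⊕ β)) :
    #{v ∈ A | v.isRight = true} = #A.toRight := by
  rw [← card_map Function.Embedding.inr (s := A.toRight)]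
  congr 1
  ext (x | v) <;> simp

lemma card_filter_div_le_val (n k : ℕ) : #{v : Fin n | n / k ≤ v} = n - n / k := by
  have h := card_filter_add_card_filter_not (s := (univ : Finset (Fin n)))
    fun v => (v : ℕ) < n / k
  simp only [not_lt, Fin.card_filter_val_lt, card_univ, Fintype.card_fin,
    min_eq_right (Nat.div_le_self n k)] at h
  omega

lemma calHk_eq_ofLinks (n k : ℕ) :
    calHk n k = ofLinks fun _ => crossing k {v : Fin n | n / k ≤ v} := by
  ext e
  simp [calHk, mem_ofLinks, crossing, insert_inl_image_inr, not_subset]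

lemma card_calHk {n : ℕ} (k : ℕ) {W : Finset (Fin n)} (hW : #W = n - n / k) :
    #(calHk n k) = n / k * #(crossing k W) := by
  simp [calHk_eq_ofLinks, card_ofLinks,
    card_crossing_congr (hW.trans (card_filter_div_le_val n k).symm)]

lemma exists_perm_card_calHk_sdiff {n k : ℕ} (L : Fin (n / k) → Finset (Finset (Fin n)))
    {W : Finset (Fin n)} (hW : #W = n - n / k) :
    ∃ σ : Equiv.Perm (Fin (n / k) ⊕ Fin n),
      #(calHk n k \ (ofLinks L).image fun e => e.image σ) = ∑ x, #(crossing k W \ L x) := by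
  obtain ⟨τ, hτ⟩ := exists_perm_card_ofLinks_crossing_sdiff L k
    (hW.trans (card_filter_div_le_val n k).symm)
  exact ⟨Equiv.sumCongr (Equiv.refl _) τ, calHk_eq_ofLinks n k ▸ hτ⟩

lemma calHk_nonempty {n k : ℕ} (hk : 2 ≤ k) (hkn : k ≤ n) : (calHk n k).Nonempty := by
  have hm : 0 < n / k := Nat.div_pos hkn (by omega)
  have hmn : n / k < n := Nat.div_lt_self (by omega) hk
  rw [← card_pos, card_calHk k (card_filter_div_le_val n k)]
  refine Nat.mul_pos hm (card_pos.2 (crossing_nonempty hk (by simpa using hkn) ?_ ?_))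
  · exact ⟨⟨n / k, hmn⟩, by simp⟩
  · exact ⟨⟨0, by omega⟩, by simpa using hm⟩

lemma le_one_of_mul_card_calHk_le {n k : ℕ} (hk : 2 ≤ k) (hkn : k ≤ n) {ε : ℝ}
    {E : Finset (Finset (Fin (n / k) ⊕ Fin n))}
    (h : ε * #(calHk n k) ≤ #(calHk n k \ E)) : ε ≤ 1 := by
  have hpos : (0 : ℝ) < #(calHk n k) := by exact_mod_cast card_pos.2 (calHk_nonempty hk hkn)
  have hle : (#(calHk n k \ E) : ℝ) ≤ #(calHk n k) := by
    exact_mod_cast card_le_card sdiff_subset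
  exact le_of_mul_le_mul_right (by linarith) hpos

theorem dense_if_far_from_extremal_general {ε : ℝ} (hε : 0 < ε) {k n : ℕ} (hk : 2 ≤ k)
    (hn : 40 * (k : ℝ) ^ 2 / ε ≤ n) {a₃ : ℝ}
    (ha₃ : a₃ ≤ ε / (2 ^ k * (Nat.factorial k : ℝ) * (8 * k)))
    {H : Finset (Finset (Fin (n / k) ⊕ Fin n))}
    (hH : ∀ e ∈ H, ∃ (x : Fin (n / k)) (s : Finset (Fin n)),
      #s = k ∧ e = insert (Sum.inl x) (s.image Sum.inr))
    (hdeg : ∀ (x : Fin (n / k)) (v : Fin n),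
      ((n - 1).choose (k - 1) : ℝ) - (n - n / k).choose (k - 1) - a₃ * (n : ℝ) ^ (k - 1) ≤
        #{e ∈ H | Sum.inl x ∈ e ∧ Sum.inr v ∈ e})
    (hfar : ∀ σ : Equiv.Perm (Fin (n / k) ⊕ Fin n),
      ε * #(calHk n k) ≤ #(calHk n k \ H.image fun e => e.image σ))
    {A : Finset (Fin (n / k) ⊕ Fin n)}
    (hAl : (1 / (k : ℝ) - ε / (8 * k)) * n ≤ #{v ∈ A | v.isLeft = true})
    (hAr : (1 - 1 / (k : ℝ) - ε / (8 * (k : ℝ) ^ 3)) * n ≤ #{v ∈ A | v.isRight = true}) :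
    ε / (8 * k) * #H ≤ #{e ∈ H | e ⊆ A} := by
  obtain ⟨L, hL, rfl⟩ := exists_eq_ofLinks hH
  simp only [card_filter_mem_mem_ofLinks] at hdeg
  rw [card_filter_isLeft_s11] at hAl
  rw [card_filter_isRight_s11] at hAr
  rcases (ofLinks L).eq_empty_or_nonempty with hempty | hne
  · simp [hempty]
  have hkn : 40 * (k : ℝ) ^ 2 ≤ ε * n := (div_le_iff₀' hε).1 hn
  have hε1 : ε ≤ 1 := le_one_of_mul_card_calHk_le hk
    (by simpa using le_card_of_ofLinks_nonempty hL hne) (hfar 1)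
  have h80 : 80 * k ≤ n := by
    have hkn' : 40 * k ^ 2 ≤ n := by
      exact_mod_cast hkn.trans (mul_le_of_le_one_left n.cast_nonneg hε1)
    nlinarith
  by_contra! hsparse
  rw [card_filter_subset_ofLinks, Nat.cast_sum] at hsparse
  obtain ⟨W, hW, hmissing⟩ := exists_sum_card_crossing_sdiff_lt (Fintype.card_fin _)
    (Fintype.card_fin n) hε hk hkn h80 ha₃ hL hdeg hAl hAr hsparse.le
  obtain ⟨σ, hσ⟩ := exists_perm_card_calHk_sdiff L hW
  refine (hfar σ).not_gt ?_
  rw [hσ, card_calHk k hW]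
  exact_mod_cast hmissing

end Extremal

end

/-- Let `ε > 0` be sufficiently small, `k ≥ 3`, `n ≥ 40k²/ε`, and set
`a₁ = ε/(8k)`, `a₂ = ε/(8k³)`, and let `a₃ < ε/(2^k·k!·8k)`. Let `H` be a
`(1,k)`-partite `(k+1)`-graph with classes `X = Fin (n/k)`, `[n]` such that
`d_H({x,v}) ≥ C(n-1,k-1) - C(n-n/k,k-1) - a₃·n^{k-1}` for all `x ∈ X`, `v ∈ [n]`,
and `|E(𝓗_k(n,n/k)) \ E(H₀)| ≥ ε·e(𝓗_k(n,n/k))` for every isomorphic copy `H₀`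
of `H` on `V(𝓗_k(n,n/k))` (given by a vertex permutation). Then `H` is
`(𝓐, a₁)`-dense where `𝓐 = {A : |A ∩ X| ≥ (1/k - a₁)n, |A ∩ [n]| ≥ (1 - 1/k - a₂)n}`. -/
theorem dense_if_far_from_extremal :
    ∃ ε₀ : ℝ, 0 < ε₀ ∧ ∀ ε : ℝ, 0 < ε → ε < ε₀ →
    ∀ k n : ℕ, 3 ≤ k → (40 * (k : ℝ) ^ 2) / ε ≤ (n : ℝ) →
    ∀ a₃ : ℝ, a₃ < ε / (2 ^ k * (Nat.factorial k : ℝ) * (8 * k)) →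
    ∀ H : Finset (Finset (Fin (n / k) ⊕ Fin n)),
      (∀ e ∈ H, ∃ (x : Fin (n / k)) (s : Finset (Fin n)),
        s.card = k ∧ e = insert (Sum.inl x) (s.image Sum.inr)) →
      (∀ (x : Fin (n / k)) (v : Fin n),
        (Nat.choose (n - 1) (k - 1) : ℝ) - (Nat.choose (n - n / k) (k - 1) : ℝ)
            - a₃ * (n : ℝ) ^ (k - 1)
          ≤ ((H.filter (fun e => Sum.inl x ∈ e ∧ Sum.inr v ∈ e)).card : ℝ)) →
      (∀ σ : Equiv.Perm (Fin (n / k) ⊕ Fin n),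
        ε * ((calHk n k).card : ℝ)
          ≤ (((calHk n k) \ (H.image (fun e => e.image σ))).card : ℝ)) →
      ∀ A : Finset (Fin (n / k) ⊕ Fin n),
        (1 / (k : ℝ) - ε / (8 * k)) * (n : ℝ)
            ≤ ((A.filter (fun v => v.isLeft = true)).card : ℝ) →
        (1 - 1 / (k : ℝ) - ε / (8 * (k : ℝ) ^ 3)) * (n : ℝ)
            ≤ ((A.filter (fun v => v.isRight = true)).card : ℝ) →
        ε / (8 * k) * (H.card : ℝ) ≤ ((H.filter (fun e => e ⊆ A)).card : ℝ) := by
  exact ⟨1, one_pos, fun ε hε _ k n hk hn a₃ ha₃ H hH hdeg hfar A hAl hAr =>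
    dense_if_far_from_extremal_general hε (by omega) hn ha₃.le hH hdeg hfar hAl hAr⟩
end
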